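/- Let T be a compactly generated triangulated category with a single compact generator G, and define the generating sequence G by G^n := {Σ^{-n}G} for all n ∈ ℤ. Then: (i) T is weakly approximable (in Neeman's sense) if and only if T is weakly G-approximable; and (ii) T is approximable if and only if T is G-approximable. -/

import Mathlib

namespace GApprox

open CategoryTheory CategoryTheory.Limits CategoryTheory.Pretriangulated

universe w v u

variable (C : Type u) [Category.{v} C] [HasZeroObject C] [HasShift C ℤ]
  [Preadditive C] [∀ n : ℤ, (shiftFunctor C n).Additive] [Pretriangulated C]
  [HasCoproducts.{v} C]

/-- The right orthogonal of a class of objects. -/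
def rOrth (A : Set C) : Set C := {X | ∀ a ∈ A, ∀ f : a ⟶ X, f = 0}

/-- The left orthogonal of a class of objects. -/
def lOrth (A : Set C) : Set C := {X | ∀ a ∈ A, ∀ f : X ⟶ a, f = 0}

/-- `Hom(A, B) = 0`. -/
def homZero (A B : Set C) : Prop := ∀ a ∈ A, ∀ b ∈ B, ∀ f : a ⟶ b, f = 0

/-- The star operation `A ⋆ B`: objects `Y` admitting a distinguished triangle
`X ⟶ Y ⟶ Z ⟶ ΣX` with `X ∈ A` and `Z ∈ B`. -/
def starSet (A B : Set C) : Set C :=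
  {Y | ∃ (X Z : C) (f : X ⟶ Y) (g : Y ⟶ Z) (h : Z ⟶ X⟦(1 : ℤ)⟧),
    Triangle.mk f g h ∈ (distTriang C) ∧ X ∈ A ∧ Z ∈ B}

/-- The (strictly full) shift `Σⁿ A` of a class of objects. -/
def shiftSet (n : ℤ) (A : Set C) : Set C :=
  {X | ∃ a ∈ A, Nonempty (X ≅ (shiftFunctor C n).obj a)}

/-- An object is compact if any map to a coproduct factors through a finite subcoproduct. -/
def IsCompactObj (X : C) : Prop :=
  ∀ (α : Type v) (f : α → C) (g : X ⟶ ∐ f),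
    ∃ (s : Finset α) (h : X ⟶ ∐ (fun i : {a : α // a ∈ s} => f i.1)),
      g = h ≫ Sigma.desc (fun i => Sigma.ι f i.1)

/-- The class of compact objects `T^c`. -/
def compacts : Set C := {X | IsCompactObj C X}

/-- The category is compactly generated. -/
def CompactlyGenerated : Prop :=
  ∀ X : C, (∀ K ∈ compacts C, ∀ f : K ⟶ X, f = 0) → IsZero X

/-- Closure under direct summands (retracts), `smd`. -/
def smd (A : Set C) : Set C :=
  {X | ∃ Y ∈ A, ∃ (i : X ⟶ Y) (r : Y ⟶ X), i ≫ r = 𝟙 X}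

/-- Closure of a class of objects under finite direct sums and extensions (`coprod`). -/
inductive extClosure (U : Set C) : C → Prop
  | of {X : C} : X ∈ U → extClosure U X
  | zero {X : C} : IsZero X → extClosure U X
  | ext {X Y Z : C} (f : X ⟶ Y) (g : Y ⟶ Z) (h : Z ⟶ X⟦(1 : ℤ)⟧) :
      Triangle.mk f g h ∈ (distTriang C) → extClosure U X → extClosure U Z → extClosure U Y

/-- Closure of a class of objects under arbitrary coproducts, extensions and
direct summands. -/
inductive bigClosure (U : Set C) : C → Prop
  | of {X : C} : X ∈ U → bigClosure U X
  | zero {X : C} : IsZero X → bigClosure U X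
  | coprod {α : Type v} (f : α → C) :
      (∀ i, bigClosure U (f i)) → ∀ {X : C}, (X ≅ ∐ f) → bigClosure U X
  | ext {X Y Z : C} (f : X ⟶ Y) (g : Y ⟶ Z) (h : Z ⟶ X⟦(1 : ℤ)⟧) :
      Triangle.mk f g h ∈ (distTriang C) → bigClosure U X → bigClosure U Z → bigClosure U Y
  | retract {X Y : C} (i : X ⟶ Y) (r : Y ⟶ X) :
      i ≫ r = 𝟙 X → bigClosure U Y → bigClosure U X

/-- Closure of a class of objects under finite direct sums, `add`. -/
def addClosure (U : Set C) : Set C :=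
  {X | ∃ (n : ℕ) (f : ULift.{v} (Fin n) → C), (∀ i, f i ∈ U) ∧ Nonempty (X ≅ ∐ f)}

/-- Closure of a class of objects under arbitrary coproducts, `Add`. -/
def bigAddClosure (U : Set C) : Set C :=
  {X | ∃ (α : Type v) (f : α → C), (∀ i, f i ∈ U) ∧ Nonempty (X ≅ ∐ f)}

/-- `coprod_n(U)`. -/
def coprodPow (U : Set C) : ℕ → Set C
  | 0 => {X | IsZero X}
  | n + 1 => starSet C (addClosure C U) (coprodPow U n)

/-- `Coprod_n(U)`. -/
def coprodPowBig (U : Set C) : ℕ → Set C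
  | 0 => {X | IsZero X}
  | n + 1 => starSet C (bigAddClosure C U) (coprodPowBig U n)

/-- `G[a,b] = ∪ { G^m : a ≤ m ≤ b }`. -/
def unionIcc (G : ℤ → Set C) (a b : ℤ) : Set C := ⋃ m ∈ Set.Icc a b, G m

/-- `G(-∞,b] = ∪ { G^m : m ≤ b }`. -/
def unionIic (G : ℤ → Set C) (b : ℤ) : Set C := ⋃ m ∈ Set.Iic b, G m

/-- `G(-∞,∞) = ∪ { G^m : m ∈ ℤ }`. -/
def unionAll (G : ℤ → Set C) : Set C := ⋃ m : ℤ, G m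

/-- `G^{[a,b]} = smd(coprod(G[a,b]))`. -/
def gInt (G : ℤ → Set C) (a b : ℤ) : Set C :=
  smd C {X | extClosure C (unionIcc C G a b) X}

/-- `G^{(-∞,b]} = smd(coprod(G(-∞,b]))`. -/
def gIic (G : ℤ → Set C) (b : ℤ) : Set C :=
  smd C {X | extClosure C (unionIic C G b) X}

/-- `G^{[a,b]}_k = smd(coprod_k(G[a,b]))`. -/
def gIntPow (G : ℤ → Set C) (a b k : ℤ) : Set C :=
  smd C (coprodPow C (unionIcc C G a b) k.toNat)

/-- `Ḡ^{[a,b]}`. -/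
def gBarInt (G : ℤ → Set C) (a b : ℤ) : Set C :=
  {X | bigClosure C (unionIcc C G a b) X}

/-- `Ḡ^{(-∞,b]}`. -/
def gBarIic (G : ℤ → Set C) (b : ℤ) : Set C :=
  {X | bigClosure C (unionIic C G b) X}

/-- `Ḡ^{[a,b]}_k = smd(Coprod_k(G[a,b]))`. -/
def gBarIntPow (G : ℤ → Set C) (a b k : ℤ) : Set C :=
  smd C (coprodPowBig C (unionIcc C G a b) k.toNat)

/-- `M^G_n := G^{(-∞,-n]}`. -/
def MG (G : ℤ → Set C) (n : ℤ) : Set C := gIic C G (-n)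

/-- `R^G_n := ⊥((M^G_n)^⊥)`, orthogonals taken in the whole category. -/
def RG (G : ℤ → Set C) (n : ℤ) : Set C := lOrth C (rOrth C (MG C G n))

/-- A pre-generating sequence. -/
structure IsPreGenSeq (G : ℤ → Set C) : Prop where
  compact : ∀ i : ℤ, G i ⊆ compacts C
  generates : smd C {X | extClosure C (unionAll C G) X} = compacts C

/-- A generating sequence. -/
structure IsGenSeq (G : ℤ → Set C) extends IsPreGenSeq C G : Prop where
  shift_cond : ∀ n : ℤ,
    shiftSet C (-1) (G n) ∪ G n ∪ shiftSet C 1 (G n) ⊆ gInt C G (n - 1) (n + 1)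

/-- A finite generating sequence. -/
structure IsFinGenSeq (G : ℤ → Set C) extends IsGenSeq C G : Prop where
  finite : ∀ i : ℤ, (G i).Finite

/-- ℕ-equivalence of generating sequences. -/
def GenSeqNEquiv (G G' : ℤ → Set C) : Prop :=
  ∃ N : ℤ, 0 ≤ N ∧ (∀ n : ℤ, G' n ⊆ gInt C G (n - N) (n + N)) ∧
    ∀ n : ℤ, G n ⊆ gInt C G' (n - N) (n + N)

/-- ℕ-equivalence of (extended good) metrics. -/
def MetricNEquiv (M N : ℤ → Set C) : Prop :=
  ∃ n : ℤ, 0 ≤ n ∧ (∀ i : ℤ, M (i + n) ⊆ N i) ∧ ∀ i : ℤ, N (i + n) ⊆ M i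

/-- An extended good metric. -/
structure IsExtGoodMetric (M : ℤ → Set C) : Prop where
  zero_mem : ∀ (n : ℤ) (X : C), IsZero X → X ∈ M n
  iso_closed : ∀ (n : ℤ) ⦃X Y : C⦄, (X ≅ Y) → X ∈ M n → Y ∈ M n
  star_subset : ∀ n : ℤ, starSet C (M n) (M n) ⊆ M n
  shift_one : ∀ n : ℤ, shiftSet C 1 (M (n + 1)) ⊆ M n
  antitone : ∀ n : ℤ, M (n + 1) ⊆ M n
  shift_neg_one : ∀ n : ℤ, shiftSet C (-1) (M (n + 1)) ⊆ M n

/-- An orthogonal metric. -/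
structure IsOrthMetric (M : ℤ → Set C) extends IsExtGoodMetric C M : Prop where
  orth : ∀ n : ℤ, lOrth C (rOrth C (M n)) = M n

/-- The closure of the compacts `T̄^c := ∩ₙ T^c ⋆ Rₙ`. -/
def closCompacts (Rm : ℤ → Set C) : Set C := ⋂ n : ℤ, starSet C (compacts C) (Rm n)

/-- `(T, R, A)` is `G`-preapproximable. -/
structure IsGPreApprox (G Rm : ℤ → Set C) (A : ℤ) : Prop where
  orthMetric : IsOrthMetric C Rm
  A_pos : 0 < A
  cond0 : ∀ i : ℤ, MG C G i ⊆ ⋃ n ∈ {n : ℤ | |n| ≤ A}, shiftSet C n (MG C G (i + 1))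
  cond1 : ∀ i : ℤ, MG C G (i + A) ⊆ Rm i ∩ compacts C
  cond2 : ∀ n : ℤ, ∃ N : ℤ, ∀ i : ℤ, N ≤ i → homZero C (G n) (Rm i)

/-- There is a distinguished triangle `E ⟶ F ⟶ D ⟶ ΣE` with `E ∈ S` and `D ∈ D`. -/
def approxTriangle (F : C) (S D : Set C) : Prop :=
  ∃ (E Dd : C) (f : E ⟶ F) (g : F ⟶ Dd) (h : Dd ⟶ E⟦(1 : ℤ)⟧),
    Triangle.mk f g h ∈ (distTriang C) ∧ E ∈ S ∧ Dd ∈ D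

/-- `(T, R, A)` is weakly `G`-approximable. -/
structure IsWeakGApprox (G Rm : ℤ → Set C) (A : ℤ) extends IsGPreApprox C G Rm A : Prop where
  hom_vanish : ∀ n i : ℤ, A ≤ n + i → homZero C (G n) (Rm i)
  approx : ∀ i : ℤ, ∀ F ∈ Rm i,
    approxTriangle C F (gBarInt C G (-A - i) (A - i)) (Rm (i + 1))

/-- `(T, R, A)` is `G`-approximable. -/
structure IsGApprox (G Rm : ℤ → Set C) (A : ℤ) extends IsWeakGApprox C G Rm A : Prop where
  approx' : ∀ i : ℤ, ∀ F ∈ Rm i,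
    approxTriangle C F (gBarIntPow C G (-A - i) (A - i) A) (Rm (i + 1))

/-- `(T, R, A)` is weakly `G`-quasiapproximable. -/
structure IsWeakGQuasiApprox (G Rm : ℤ → Set C) (A : ℤ) extends IsGPreApprox C G Rm A : Prop where
  hom_vanish : ∀ n i : ℤ, A ≤ n + i → homZero C (G n) (Rm i)
  approx : ∀ i : ℤ, ∀ F ∈ Rm i ∩ closCompacts C Rm,
    approxTriangle C F (gBarInt C G (-A - i) (A - i)) (Rm (i + 1) ∩ closCompacts C Rm)

/-- `(T, R, A)` is `G`-quasiapproximable. -/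
structure IsGQuasiApprox (G Rm : ℤ → Set C) (A : ℤ) extends IsWeakGQuasiApprox C G Rm A : Prop where
  approx' : ∀ i : ℤ, ∀ F ∈ Rm i ∩ closCompacts C Rm,
    approxTriangle C F (gBarIntPow C G (-A - i) (A - i) A) (Rm (i + 1) ∩ closCompacts C Rm)

/-- The coproduct of a sequence of objects. -/
noncomputable def seqCoprod (E : ℕ → C) : C := ∐ (fun n : ULift.{v} ℕ => E n.down)

/-- The canonical inclusion into the coproduct of a sequence. -/
noncomputable def seqInj (E : ℕ → C) (n : ℕ) : E n ⟶ seqCoprod C E :=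
  Sigma.ι (fun n : ULift.{v} ℕ => E n.down) (ULift.up n)

/-- The map `1 - shift` on the coproduct of a sequence. -/
noncomputable def oneMinusShift (E : ℕ → C) (e : ∀ n, E n ⟶ E (n + 1)) :
    seqCoprod C E ⟶ seqCoprod C E :=
  Sigma.desc (fun n => seqInj C E n.down - e n.down ≫ seqInj C E (n.down + 1))

/-- `H`, equipped with `π`, `δ`, is a homotopy colimit of the sequence `E`. -/
def IsHocolim (E : ℕ → C) (e : ∀ n, E n ⟶ E (n + 1)) (H : C)
    (π : seqCoprod C E ⟶ H) (δ : H ⟶ (seqCoprod C E)⟦(1 : ℤ)⟧) : Prop :=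
  Triangle.mk (oneMinusShift C E e) π δ ∈ (distTriang C)

/-- A single compact generator. -/
def IsCompactGenerator (G₀ : C) : Prop :=
  IsCompactObj C G₀ ∧ ∀ X : C, (∀ n : ℤ, ∀ f : (shiftFunctor C n).obj G₀ ⟶ X, f = 0) → IsZero X

/-- The strictly full subcategory `{Σʲ G₀}`. -/
def singletonShift (G₀ : C) (j : ℤ) : Set C :=
  {X | Nonempty (X ≅ (shiftFunctor C j).obj G₀)}

/-- The generating sequence `Gⁿ := {Σ⁻ⁿ G₀}`. -/
def genSeqNeg (G₀ : C) (n : ℤ) : Set C := singletonShift C G₀ (-n)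

/-- The generating sequence `Gⁿ := {Σⁿ G₀}`. -/
def genSeqPos (G₀ : C) (n : ℤ) : Set C := singletonShift C G₀ n

/-- A t-structure `(T^{≤0}, T^{≥0}) = (U, V)`. -/
structure IsTStructure (U V : Set C) : Prop where
  iso_closed_le : ∀ ⦃X Y : C⦄, (X ≅ Y) → X ∈ U → Y ∈ U
  iso_closed_ge : ∀ ⦃X Y : C⦄, (X ≅ Y) → X ∈ V → Y ∈ V
  shift_le : shiftSet C 1 U ⊆ U
  shift_ge : V ⊆ shiftSet C 1 V
  orthogonal : homZero C U (shiftSet C (-1) V)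
  exists_triangle : ∀ t : C, ∃ (u v : C) (f : u ⟶ t) (g : t ⟶ v) (h : v ⟶ u⟦(1 : ℤ)⟧),
    Triangle.mk f g h ∈ (distTriang C) ∧ u ∈ U ∧ v ∈ shiftSet C (-1) V

/-- `T` is weakly approximable in the sense of Neeman, with respect to the compact
generator `G₀`. -/
def WeaklyApproximable (G₀ : C) : Prop :=
  ∃ (A : ℤ) (U V : Set C), 0 < A ∧ IsTStructure C U V ∧
    (shiftFunctor C A).obj G₀ ∈ U ∧
    (∀ i : ℤ, A ≤ i → ∀ u ∈ U, ∀ f : (shiftFunctor C (-i)).obj G₀ ⟶ u, f = 0) ∧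
    ∀ F ∈ U, approxTriangle C F (gBarInt C (genSeqPos C G₀) (-A) A) (shiftSet C 1 U)

/-- `T` is approximable in the sense of Neeman, with respect to the compact generator `G₀`. -/
def Approximable (G₀ : C) : Prop :=
  ∃ (A : ℤ) (U V : Set C), 0 < A ∧ IsTStructure C U V ∧
    (shiftFunctor C A).obj G₀ ∈ U ∧
    (∀ i : ℤ, A ≤ i → ∀ u ∈ U, ∀ f : (shiftFunctor C (-i)).obj G₀ ⟶ u, f = 0) ∧
    ∀ F ∈ U, approxTriangle C F (gBarIntPow C (genSeqPos C G₀) (-A) A A) (shiftSet C 1 U)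

set_option linter.unusedSectionVars false

section Aux
variable {C}

/-! ### Exactness wrappers -/

lemma tz12 {X Y Z : C} {f : X ⟶ Y} {g : Y ⟶ Z} {h : Z ⟶ X⟦(1 : ℤ)⟧}
    (hT : Triangle.mk f g h ∈ (distTriang C)) : f ≫ g = 0 :=
  comp_distTriang_mor_zero₁₂ _ hT

lemma tz23 {X Y Z : C} {f : X ⟶ Y} {g : Y ⟶ Z} {h : Z ⟶ X⟦(1 : ℤ)⟧}
    (hT : Triangle.mk f g h ∈ (distTriang C)) : g ≫ h = 0 :=
  comp_distTriang_mor_zero₂₃ _ hT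

lemma tz31 {X Y Z : C} {f : X ⟶ Y} {g : Y ⟶ Z} {h : Z ⟶ X⟦(1 : ℤ)⟧}
    (hT : Triangle.mk f g h ∈ (distTriang C)) : h ≫ f⟦(1 : ℤ)⟧' = 0 :=
  comp_distTriang_mor_zero₃₁ _ hT

lemma ye2 {X Y Z : C} {f : X ⟶ Y} {g : Y ⟶ Z} {h : Z ⟶ X⟦(1 : ℤ)⟧}
    (hT : Triangle.mk f g h ∈ (distTriang C)) {W : C} (φ : Y ⟶ W) (hφ : f ≫ φ = 0) :
    ∃ ψ : Z ⟶ W, φ = g ≫ ψ :=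
  Triangle.yoneda_exact₂ _ hT φ hφ

lemma ye3 {X Y Z : C} {f : X ⟶ Y} {g : Y ⟶ Z} {h : Z ⟶ X⟦(1 : ℤ)⟧}
    (hT : Triangle.mk f g h ∈ (distTriang C)) {W : C} (φ : Z ⟶ W) (hφ : g ≫ φ = 0) :
    ∃ ψ : X⟦(1 : ℤ)⟧ ⟶ W, φ = h ≫ ψ :=
  Triangle.yoneda_exact₃ _ hT φ hφ

lemma trot {X Y Z : C} {f : X ⟶ Y} {g : Y ⟶ Z} {h : Z ⟶ X⟦(1 : ℤ)⟧}
    (hT : Triangle.mk f g h ∈ (distTriang C)) :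
    Triangle.mk g h (-f⟦(1 : ℤ)⟧') ∈ (distTriang C) :=
  rot_of_distTriang _ hT

lemma ye4 {X Y Z : C} {f : X ⟶ Y} {g : Y ⟶ Z} {h : Z ⟶ X⟦(1 : ℤ)⟧}
    (hT : Triangle.mk f g h ∈ (distTriang C)) {W : C} (φ : X⟦(1 : ℤ)⟧ ⟶ W) (hφ : h ≫ φ = 0) :
    ∃ ψ : Y⟦(1 : ℤ)⟧ ⟶ W, φ = f⟦(1 : ℤ)⟧' ≫ ψ := by
  obtain ⟨ψ, hψ⟩ := ye3 (trot hT) φ hφ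
  exact ⟨-ψ, by rw [hψ]; simp⟩

lemma ye5 {X Y Z : C} {f : X ⟶ Y} {g : Y ⟶ Z} {h : Z ⟶ X⟦(1 : ℤ)⟧}
    (hT : Triangle.mk f g h ∈ (distTriang C)) {W : C} (φ : Y⟦(1 : ℤ)⟧ ⟶ W)
    (hφ : f⟦(1 : ℤ)⟧' ≫ φ = 0) :
    ∃ ψ : Z⟦(1 : ℤ)⟧ ⟶ W, φ = g⟦(1 : ℤ)⟧' ≫ ψ :=
  ye4 (trot hT) φ (by rw [Preadditive.neg_comp, hφ, neg_zero])

lemma ye6 {X Y Z : C} {f : X ⟶ Y} {g : Y ⟶ Z} {h : Z ⟶ X⟦(1 : ℤ)⟧}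
    (hT : Triangle.mk f g h ∈ (distTriang C)) {W : C} (φ : Z⟦(1 : ℤ)⟧ ⟶ W)
    (hφ : g⟦(1 : ℤ)⟧' ≫ φ = 0) :
    ∃ ψ : X⟦(1 : ℤ)⟧⟦(1 : ℤ)⟧ ⟶ W, φ = h⟦(1 : ℤ)⟧' ≫ ψ :=
  ye5 (trot hT) φ hφ

lemma ce1 {X Y Z : C} {f : X ⟶ Y} {g : Y ⟶ Z} {h : Z ⟶ X⟦(1 : ℤ)⟧}
    (hT : Triangle.mk f g h ∈ (distTriang C)) {W : C} (φ : W ⟶ X⟦(1 : ℤ)⟧)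
    (hφ : φ ≫ f⟦(1 : ℤ)⟧' = 0) :
    ∃ ψ : W ⟶ Z, φ = ψ ≫ h :=
  Triangle.coyoneda_exact₁ _ hT φ hφ

lemma ce2 {X Y Z : C} {f : X ⟶ Y} {g : Y ⟶ Z} {h : Z ⟶ X⟦(1 : ℤ)⟧}
    (hT : Triangle.mk f g h ∈ (distTriang C)) {W : C} (φ : W ⟶ Y) (hφ : φ ≫ g = 0) :
    ∃ ψ : W ⟶ X, φ = ψ ≫ f :=
  Triangle.coyoneda_exact₂ _ hT φ hφ

lemma ce3 {X Y Z : C} {f : X ⟶ Y} {g : Y ⟶ Z} {h : Z ⟶ X⟦(1 : ℤ)⟧}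
    (hT : Triangle.mk f g h ∈ (distTriang C)) {W : C} (φ : W ⟶ Z) (hφ : φ ≫ h = 0) :
    ∃ ψ : W ⟶ Y, φ = ψ ≫ g :=
  Triangle.coyoneda_exact₃ _ hT φ hφ

lemma tm3 {X Y Z X' Y' Z' : C} {f : X ⟶ Y} {g : Y ⟶ Z} {h : Z ⟶ X⟦(1 : ℤ)⟧}
    {f' : X' ⟶ Y'} {g' : Y' ⟶ Z'} {h' : Z' ⟶ X'⟦(1 : ℤ)⟧}
    (hT : Triangle.mk f g h ∈ (distTriang C)) (hT' : Triangle.mk f' g' h' ∈ (distTriang C))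
    (a : X ⟶ X') (b : Y ⟶ Y') (hab : f ≫ b = a ≫ f') :
    ∃ c : Z ⟶ Z', g ≫ c = b ≫ g' ∧ h ≫ a⟦(1 : ℤ)⟧' = c ≫ h' :=
  complete_distinguished_triangle_morphism _ _ hT hT' a b hab

lemma tm2 {X Y Z X' Y' Z' : C} {f : X ⟶ Y} {g : Y ⟶ Z} {h : Z ⟶ X⟦(1 : ℤ)⟧}
    {f' : X' ⟶ Y'} {g' : Y' ⟶ Z'} {h' : Z' ⟶ X'⟦(1 : ℤ)⟧}
    (hT : Triangle.mk f g h ∈ (distTriang C)) (hT' : Triangle.mk f' g' h' ∈ (distTriang C))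
    (a : X ⟶ X') (c : Z ⟶ Z') (hac : h ≫ a⟦(1 : ℤ)⟧' = c ≫ h') :
    ∃ b : Y ⟶ Y', f ≫ b = a ≫ f' ∧ g ≫ c = b ≫ g' :=
  complete_distinguished_triangle_morphism₂ _ _ hT hT' a c hac

lemma dist_iso₂ {X Y Y' Z : C} {f : X ⟶ Y} {g : Y ⟶ Z} {h : Z ⟶ X⟦(1 : ℤ)⟧}
    (hT : Triangle.mk f g h ∈ (distTriang C)) (e : Y ≅ Y') :
    Triangle.mk (f ≫ e.hom) (e.inv ≫ g) h ∈ (distTriang C) := by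
  refine isomorphic_distinguished _ hT _ ?_
  exact Triangle.isoMk _ _ (Iso.refl _) e.symm (Iso.refl _)
    (by change (f ≫ e.hom) ≫ e.inv = 𝟙 X ≫ f; simp)
    (by change (e.inv ≫ g) ≫ 𝟙 Z = e.inv ≫ g; simp)
    (by change h ≫ (𝟙 X)⟦(1 : ℤ)⟧' = 𝟙 Z ≫ h; simp)

lemma dist_iso₃ {X Y Z Z' : C} {f : X ⟶ Y} {g : Y ⟶ Z} {h : Z ⟶ X⟦(1 : ℤ)⟧}
    (hT : Triangle.mk f g h ∈ (distTriang C)) (e : Z ≅ Z') :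
    Triangle.mk f (g ≫ e.hom) (e.inv ≫ h) ∈ (distTriang C) := by
  refine isomorphic_distinguished _ hT _ ?_
  exact Triangle.isoMk _ _ (Iso.refl _) (Iso.refl _) e.symm
    (by change f ≫ 𝟙 Y = 𝟙 X ≫ f; simp)
    (by change (g ≫ e.hom) ≫ e.inv = 𝟙 Y ≫ g; simp)
    (by change (e.inv ≫ h) ≫ (𝟙 X)⟦(1 : ℤ)⟧' = e.inv ≫ h; simp)

lemma dist_shift {X Y Z : C} {f : X ⟶ Y} {g : Y ⟶ Z} {h : Z ⟶ X⟦(1 : ℤ)⟧}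
    (hT : Triangle.mk f g h ∈ (distTriang C)) (n : ℤ) :
    ∃ (f' : X⟦n⟧ ⟶ Y⟦n⟧) (g' : Y⟦n⟧ ⟶ Z⟦n⟧) (h' : Z⟦n⟧ ⟶ X⟦n⟧⟦(1 : ℤ)⟧),
      Triangle.mk f' g' h' ∈ (distTriang C) :=
  ⟨_, _, _, Triangle.shift_distinguished _ hT n⟩

/-! ### Goodness of a morphism with respect to a target -/

/-- `p` is good for `Y` iff the cone of `p` has no non-zero maps to `Y`. -/
def Good {W F : C} (p : W ⟶ F) (Y : C) : Prop :=
  (∀ ψ : F ⟶ Y, p ≫ ψ = 0 → ψ = 0) ∧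
    ∀ μ : W⟦(1 : ℤ)⟧ ⟶ Y, ∃ ν : F⟦(1 : ℤ)⟧ ⟶ Y, μ = p⟦(1 : ℤ)⟧' ≫ ν

lemma Good.cone {X Y Z T : C} {f : X ⟶ Y} {g : Y ⟶ Z} {h : Z ⟶ X⟦(1 : ℤ)⟧}
    (hT : Triangle.mk f g h ∈ (distTriang C)) (H : Good f T) (φ : Z ⟶ T) : φ = 0 := by
  have h1 := H.1 (g ≫ φ) (by rw [← Category.assoc, tz12 hT, zero_comp])
  obtain ⟨μ, rfl⟩ := ye3 hT φ h1
  obtain ⟨ν, rfl⟩ := H.2 μ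
  rw [← Category.assoc, tz31 hT, zero_comp]

lemma good_of_cone {X Y Z T : C} {f : X ⟶ Y} {g : Y ⟶ Z} {h : Z ⟶ X⟦(1 : ℤ)⟧}
    (hT : Triangle.mk f g h ∈ (distTriang C)) (H : ∀ φ : Z ⟶ T, φ = 0) : Good f T := by
  refine ⟨fun ψ hψ => ?_, fun μ => ye4 hT μ (H _)⟩
  obtain ⟨φ, rfl⟩ := ye2 hT ψ hψ
  rw [H φ, comp_zero]

/-- An octahedron-free composition lemma. -/
lemma good_ext {E F D W' : C} {a : E ⟶ F} {b : F ⟶ D} {c : D ⟶ E⟦(1 : ℤ)⟧}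
    (hT : Triangle.mk a b c ∈ (distTriang C)) (w : W' ⟶ D) :
    ∃ (W : C) (i : E ⟶ W) (q : W ⟶ W') (p : W ⟶ F),
      Triangle.mk i q (w ≫ c) ∈ (distTriang C) ∧ i ≫ p = a ∧ p ≫ b = q ≫ w ∧
      ∀ Y, Good w Y → Good p Y := by
  obtain ⟨W, i, q, hW⟩ := distinguished_cocone_triangle₂ (w ≫ c)
  obtain ⟨p, hp1, hp2⟩ := tm2 hW hT (𝟙 E) w
    (by simp)
  have hp1' : i ≫ p = a := by simpa using hp1
  have hp2' : p ≫ b = q ≫ w := by simpa using hp2.symm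
  refine ⟨W, i, q, p, hW, hp1', hp2', fun Y H => ⟨fun ψ hψ => ?_, fun μ => ?_⟩⟩
  · obtain ⟨θ, rfl⟩ := ye2 hT ψ (by rw [← hp1', Category.assoc, hψ, comp_zero])
    have h1 : q ≫ w ≫ θ = 0 := by
      rw [← Category.assoc, ← hp2', Category.assoc, hψ]
    obtain ⟨κ, hκ⟩ := ye3 hW _ h1
    have h2 := H.1 (θ - c ≫ κ) (by rw [Preadditive.comp_sub, hκ, Category.assoc, sub_self])
    rw [sub_eq_zero.1 h2, ← Category.assoc, tz23 hT, zero_comp]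
  · have h1 : c ≫ i⟦(1 : ℤ)⟧' ≫ μ = 0 := by
      refine H.1 _ ?_
      have := tz31 hW
      rw [← Category.assoc, ← Category.assoc, this, zero_comp]
    obtain ⟨ν, hν⟩ := ye4 hT _ h1
    have h2 : i⟦(1 : ℤ)⟧' ≫ (μ - p⟦(1 : ℤ)⟧' ≫ ν) = 0 := by
      rw [Preadditive.comp_sub, hν, ← Category.assoc, ← Functor.map_comp, hp1', sub_self]
    obtain ⟨l, hl⟩ := ye5 hW _ h2
    obtain ⟨l', rfl⟩ := H.2 l
    refine ⟨ν + b⟦(1 : ℤ)⟧' ≫ l', ?_⟩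
    rw [Preadditive.comp_add, ← Category.assoc (p⟦(1 : ℤ)⟧'), ← Functor.map_comp, hp2',
      Functor.map_comp, Category.assoc, ← hl]
    abel

/-- The dual octahedron-free lemma. -/
lemma good_quot {x E E' F F₁ : C} {i : x ⟶ E} {q : E ⟶ E'} {d : E' ⟶ x⟦(1 : ℤ)⟧}
    (hT : Triangle.mk i q d ∈ (distTriang C)) {f : E ⟶ F} {b : F ⟶ F₁} {c : F₁ ⟶ x⟦(1 : ℤ)⟧}
    (hF : Triangle.mk (i ≫ f) b c ∈ (distTriang C)) :
    ∃ f' : E' ⟶ F₁, q ≫ f' = f ≫ b ∧ f' ≫ c = d ∧ ∀ Y, Good f Y → Good f' Y := by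
  obtain ⟨f', h1, h2⟩ := tm3 hT hF (𝟙 x) f
    (by simp)
  have h1' : q ≫ f' = f ≫ b := by simpa using h1
  have h2' : f' ≫ c = d := by simpa using h2.symm
  refine ⟨f', h1', h2', fun Y H => ⟨fun ψ hψ => ?_, fun μ => ?_⟩⟩
  · have hb : b ≫ ψ = 0 := H.1 _ (by rw [← Category.assoc, ← h1', Category.assoc, hψ, comp_zero])
    obtain ⟨κ, rfl⟩ := ye3 hF ψ hb
    obtain ⟨ρ, rfl⟩ := ye4 hT κ (by rw [← h2', Category.assoc, hψ])
    obtain ⟨ρ', rfl⟩ := H.2 ρ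
    have := tz31 hF
    rw [← Category.assoc (i⟦(1 : ℤ)⟧'), ← Functor.map_comp, ← Category.assoc, this, zero_comp]
  · obtain ⟨ν, hν⟩ := H.2 (q⟦(1 : ℤ)⟧' ≫ μ)
    have h3 : (i ≫ f)⟦(1 : ℤ)⟧' ≫ ν = 0 := by
      rw [Functor.map_comp, Category.assoc, ← hν, ← Category.assoc, ← Functor.map_comp, tz12 hT,
        Functor.map_zero, zero_comp]
    obtain ⟨ν', rfl⟩ := ye5 hF ν h3
    have h4 : q⟦(1 : ℤ)⟧' ≫ (μ - f'⟦(1 : ℤ)⟧' ≫ ν') = 0 := by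
      rw [Preadditive.comp_sub, hν, ← Category.assoc, ← Category.assoc, ← Functor.map_comp,
        ← Functor.map_comp, h1', sub_self]
    obtain ⟨κ, hκ⟩ := ye6 hT _ h4
    refine ⟨ν' + c⟦(1 : ℤ)⟧' ≫ κ, ?_⟩
    rw [Preadditive.comp_add, ← Category.assoc (f'⟦(1 : ℤ)⟧') (c⟦(1 : ℤ)⟧'), ← Functor.map_comp,
      h2', ← hκ]
    abel

lemma Good.retract {W F W₀ F₀ Y : C} {p : W ⟶ F} {f : W₀ ⟶ F₀} (H : Good p Y)
    (j : W₀ ⟶ W) (q : W ⟶ W₀) (i : F₀ ⟶ F) (r : F ⟶ F₀) (hjq : j ≫ q = 𝟙 _) (hir : i ≫ r = 𝟙 _)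
    (h1 : j ≫ p = f ≫ i) (h2 : q ≫ f = p ≫ r) : Good f Y := by
  refine ⟨fun ψ hψ => ?_, fun μ => ?_⟩
  · have := H.1 (r ≫ ψ) (by rw [← Category.assoc, ← h2, Category.assoc, hψ, comp_zero])
    rw [← Category.id_comp ψ, ← hir, Category.assoc, this, comp_zero]
  · obtain ⟨ν, hν⟩ := H.2 (q⟦(1 : ℤ)⟧' ≫ μ)
    refine ⟨i⟦(1 : ℤ)⟧' ≫ ν, ?_⟩
    rw [← Category.assoc, ← Functor.map_comp, ← h1, Functor.map_comp, Category.assoc, ← hν,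
      ← Category.assoc, ← Functor.map_comp, hjq]
    simp

end Aux

set_option linter.unusedSectionVars false
section Aux
variable {C}

/-! ### Compact objects -/

lemma compact_sum {K : C} (hK : IsCompactObj C K) {α : Type v} (f : α → C) (g : K ⟶ ∐ f) :
    ∃ (s : Finset α) (x : ∀ i, K ⟶ f i), g = ∑ i ∈ s, x i ≫ Sigma.ι f i := by
  classical
  obtain ⟨s, h, rfl⟩ := hK α f g
  let f' : {a : α // a ∈ s} → C := fun i => f i.1
  have hid : 𝟙 (∐ f') = ∑ i, Sigma.π f' i ≫ Sigma.ι f' i := by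
    refine Sigma.hom_ext _ _ (fun j => ?_)
    rw [Preadditive.comp_sum, Finset.sum_eq_single j]
    · rw [← Category.assoc, Sigma.ι_π_eq_id]; simp
    · intro b _ hb
      rw [← Category.assoc, Sigma.ι_π_of_ne _ hb.symm, zero_comp]
    · simp
  refine ⟨s, fun i => if hi : i ∈ s then h ≫ Sigma.π f' ⟨i, hi⟩ else 0, ?_⟩
  rw [← Finset.sum_coe_sort]
  have h2 : h = ∑ i, (h ≫ Sigma.π f' i) ≫ Sigma.ι f' i := by
    conv_lhs => rw [← Category.comp_id h]
    change h ≫ 𝟙 (∐ f') = _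
    rw [hid, Preadditive.comp_sum]
    simp only [Category.assoc]
  conv_lhs => rw [h2]
  rw [Preadditive.sum_comp]
  refine Finset.sum_congr rfl (fun i _ => ?_)
  rw [Category.assoc]
  have h3 : Sigma.ι f' i ≫ Sigma.desc (fun i : {a : α // a ∈ s} => Sigma.ι f i.1) =
    Sigma.ι f i.1 := Sigma.ι_desc _ _
  rw [h3]
  simp

lemma compact_of_sum {K : C} (H : ∀ {α : Type v} (f : α → C) (g : K ⟶ ∐ f),
    ∃ (s : Finset α) (x : ∀ i, K ⟶ f i), g = ∑ i ∈ s, x i ≫ Sigma.ι f i) : IsCompactObj C K := by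
  intro α f g
  obtain ⟨s, x, rfl⟩ := H f g
  refine ⟨s, ∑ i : {a : α // a ∈ s}, x i.1 ≫
    Sigma.ι (fun i : {a : α // a ∈ s} => f i.1) i, ?_⟩
  rw [Preadditive.sum_comp, ← Finset.sum_coe_sort]
  refine Finset.sum_congr rfl (fun i _ => ?_)
  rw [Category.assoc]
  congr 1
  exact (Sigma.ι_desc (f := fun i : {a : α // a ∈ s} => f i.1)
    (fun i : {a : α // a ∈ s} => Sigma.ι f i.1) i).symm

lemma compact_zero {X : C} (hX : IsZero X) : IsCompactObj C X :=
  compact_of_sum fun _ _ => ⟨∅, fun _ => 0, hX.eq_of_src _ _⟩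

lemma compact_retract {X Y : C} (i : X ⟶ Y) (r : Y ⟶ X) (h : i ≫ r = 𝟙 X)
    (hY : IsCompactObj C Y) : IsCompactObj C X := by
  refine compact_of_sum fun f g => ?_
  obtain ⟨s, x, hx⟩ := compact_sum hY f (r ≫ g)
  refine ⟨s, fun j => i ≫ x j, ?_⟩
  rw [← Category.id_comp g, ← h, Category.assoc, hx, Preadditive.comp_sum]
  simp only [Category.assoc]

lemma compact_iso {X Y : C} (e : X ≅ Y) (hY : IsCompactObj C Y) : IsCompactObj C X :=
  compact_retract e.hom e.inv e.hom_inv_id hY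

lemma compact_ext {X Y Z : C} {f : X ⟶ Y} {g : Y ⟶ Z} {h : Z ⟶ X⟦(1 : ℤ)⟧}
    (hT : Triangle.mk f g h ∈ (distTriang C)) (hX : IsCompactObj C X) (hZ : IsCompactObj C Z) :
    IsCompactObj C Y := by
  classical
  refine compact_of_sum fun {α} F φ => ?_
  obtain ⟨s, x, hx⟩ := compact_sum hX F (f ≫ φ)
  let ρ : ∐ F ⟶ ∐ F := 𝟙 _ - ∑ i ∈ s, Sigma.π F i ≫ Sigma.ι F i
  have hρ : ∀ i ∈ s, Sigma.ι F i ≫ ρ = 0 := by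
    intro i hi
    simp only [ρ, Preadditive.comp_sub, Preadditive.comp_sum]
    rw [Finset.sum_eq_single i]
    · rw [← Category.assoc, Sigma.ι_π_eq_id]; simp
    · intro b _ hb
      rw [← Category.assoc, Sigma.ι_π_of_ne _ hb.symm, zero_comp]
    · exact fun h => absurd hi h
  obtain ⟨ψ, hψ⟩ := ye2 hT (φ ≫ ρ) (by
    rw [← Category.assoc, hx, Preadditive.sum_comp]
    refine Finset.sum_eq_zero fun i hi => ?_
    rw [Category.assoc, hρ i hi, comp_zero])
  obtain ⟨t, y, hy⟩ := compact_sum hZ F ψ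
  have hφ : φ = (∑ i ∈ t, (g ≫ y i) ≫ Sigma.ι F i) +
      ∑ i ∈ s, (φ ≫ Sigma.π F i) ≫ Sigma.ι F i := by
    have h1 : φ ≫ ρ = φ - ∑ i ∈ s, (φ ≫ Sigma.π F i) ≫ Sigma.ι F i := by
      simp only [ρ, Preadditive.comp_sub, Preadditive.comp_sum, Category.comp_id, Category.assoc]
    have h2 : φ ≫ ρ = ∑ i ∈ t, (g ≫ y i) ≫ Sigma.ι F i := by
      rw [hψ, hy, Preadditive.comp_sum]
      simp only [Category.assoc]
    rw [← h2, h1]; abel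
  refine ⟨t ∪ s, fun i => (if i ∈ t then g ≫ y i else 0) + (if i ∈ s then φ ≫ Sigma.π F i else 0),
    ?_⟩
  simp only [Preadditive.add_comp, Finset.sum_add_distrib]
  conv_lhs => rw [hφ]
  congr 1
  · rw [← Finset.sum_subset (Finset.subset_union_left (s₁ := t) (s₂ := s))]
    · exact Finset.sum_congr rfl fun i hi => by rw [if_pos hi]
    · intro i _ hi; rw [if_neg hi, zero_comp]
  · rw [← Finset.sum_subset (Finset.subset_union_right (s₁ := t) (s₂ := s))]
    · exact Finset.sum_congr rfl fun i hi => by rw [if_pos hi]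
    · intro i _ hi; rw [if_neg hi, zero_comp]

lemma compact_shift {K : C} (hK : IsCompactObj C K) (n : ℤ) : IsCompactObj C (K⟦n⟧) := by
  refine compact_of_sum fun {α} f g => ?_
  let F := shiftFunctor C (-n)
  let e : K ≅ F.obj (K⟦n⟧) := (shiftShiftNeg K n).symm
  let c := PreservesCoproduct.iso F f
  obtain ⟨s, x, hx⟩ := compact_sum hK _ (e.hom ≫ F.map g ≫ c.hom)
  refine ⟨s, fun i => F.preimage (e.inv ≫ x i), ?_⟩
  apply F.map_injective
  rw [Functor.map_sum]
  have h1 : F.map g = e.inv ≫ (e.hom ≫ F.map g ≫ c.hom) ≫ c.inv := by simp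
  rw [h1, hx, Preadditive.sum_comp, Preadditive.comp_sum]
  refine Finset.sum_congr rfl fun i _ => ?_
  rw [F.map_comp, F.map_preimage, Category.assoc, Category.assoc, PreservesCoproduct.inv_hom,
    ι_comp_sigmaComparison]

/-! ### Homotopy colimits -/

/-- Projection from a sequential coproduct. -/
noncomputable def seqPi (E : ℕ → C) (n : ℕ) : seqCoprod C E ⟶ E n := by
  classical
  exact Sigma.π (fun n : ULift.{v} ℕ => E n.down) (ULift.up n)

lemma seqInj_pi (E : ℕ → C) (n : ℕ) : seqInj C E n ≫ seqPi E n = 𝟙 _ := by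
  classical
  exact Sigma.ι_π_eq_id (fun n : ULift.{v} ℕ => E n.down) (ULift.up n)

lemma seqInj_pi_ne (E : ℕ → C) {n m : ℕ} (h : n ≠ m) : seqInj C E n ≫ seqPi E m = 0 := by
  classical
  exact Sigma.ι_π_of_ne (fun n : ULift.{v} ℕ => E n.down) (fun h' => h (congrArg ULift.down h'))

lemma seq_ext {E : ℕ → C} {Y : C} {f g : seqCoprod C E ⟶ Y}
    (h : ∀ n, seqInj C E n ≫ f = seqInj C E n ≫ g) : f = g :=
  Sigma.hom_ext _ _ fun n => h n.down

/-- Maps out of a sequential coproduct. -/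
noncomputable def seqDesc (E : ℕ → C) {Y : C} (f : ∀ n, E n ⟶ Y) : seqCoprod C E ⟶ Y :=
  Sigma.desc fun n => f n.down

lemma seqInj_desc (E : ℕ → C) {Y : C} (f : ∀ n, E n ⟶ Y) (n : ℕ) :
    seqInj C E n ≫ seqDesc E f = f n :=
  Sigma.ι_desc _ _

lemma seqInj_oms (E : ℕ → C) (e : ∀ n, E n ⟶ E (n + 1)) (n : ℕ) :
    seqInj C E n ≫ oneMinusShift C E e = seqInj C E n - e n ≫ seqInj C E (n + 1) :=
  Sigma.ι_desc _ _

lemma oms_pi_zero (E : ℕ → C) (e : ∀ n, E n ⟶ E (n + 1)) :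
    oneMinusShift C E e ≫ seqPi E 0 = seqPi E 0 := by
  refine seq_ext fun n => ?_
  rw [← Category.assoc, seqInj_oms, Preadditive.sub_comp, Category.assoc,
    seqInj_pi_ne E (Nat.succ_ne_zero n), comp_zero, sub_zero]

lemma oms_pi_succ (E : ℕ → C) (e : ∀ n, E n ⟶ E (n + 1)) (m : ℕ) :
    oneMinusShift C E e ≫ seqPi E (m + 1) = seqPi E (m + 1) - seqPi E m ≫ e m := by
  refine seq_ext fun n => ?_
  rw [← Category.assoc, seqInj_oms, Preadditive.sub_comp, Preadditive.comp_sub, Category.assoc]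
  congr 1
  by_cases h : n = m
  · subst h
    rw [seqInj_pi, ← Category.assoc, seqInj_pi, Category.id_comp, Category.comp_id]
  · rw [seqInj_pi_ne E (fun h' => h (Nat.succ_injective h')), ← Category.assoc, seqInj_pi_ne E h,
      comp_zero, zero_comp]

lemma compact_seq {K : C} (hK : IsCompactObj C K) (E : ℕ → C) (g : K ⟶ seqCoprod C E) :
    ∃ (s : Finset ℕ) (x : ∀ i, K ⟶ E i), g = ∑ i ∈ s, x i ≫ seqInj C E i := by
  classical
  obtain ⟨s, x, hx⟩ := compact_sum hK (fun n : ULift.{v} ℕ => E n.down) g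
  refine ⟨s.map ⟨ULift.down, ULift.down_injective⟩, fun i => x (ULift.up i), ?_⟩
  rw [Finset.sum_map]
  exact hx

lemma compact_seq_eventually {K : C} (hK : IsCompactObj C K) (E : ℕ → C)
    (g : K ⟶ seqCoprod C E) : ∃ N : ℕ, ∀ n, N ≤ n → g ≫ seqPi E n = 0 := by
  obtain ⟨s, x, rfl⟩ := compact_seq hK E g
  refine ⟨s.sup id + 1, fun n hn => ?_⟩
  rw [Preadditive.sum_comp]
  refine Finset.sum_eq_zero fun i hi => ?_
  have : i ≤ s.sup id := Finset.le_sup (f := id) hi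
  rw [Category.assoc, seqInj_pi_ne E (by omega), comp_zero]

lemma compact_seq_inj {K : C} (hK : IsCompactObj C K) (E : ℕ → C)
    (g : K ⟶ seqCoprod C E) (h : ∀ n, g ≫ seqPi E n = 0) : g = 0 := by
  obtain ⟨s, x, rfl⟩ := compact_seq hK E g
  refine Finset.sum_eq_zero fun i hi => ?_
  have := h i
  rw [Preadditive.sum_comp, Finset.sum_eq_single i] at this
  · rw [Category.assoc, seqInj_pi, Category.comp_id] at this
    rw [this, zero_comp]
  · intro j _ hj
    rw [Category.assoc, seqInj_pi_ne E hj, comp_zero]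
  · exact fun h => absurd hi h

lemma oms_inj {K : C} (hK : IsCompactObj C K) (E : ℕ → C) (e : ∀ n, E n ⟶ E (n + 1))
    (g : K ⟶ seqCoprod C E) (h : g ≫ oneMinusShift C E e = 0) : g = 0 := by
  refine compact_seq_inj hK E g fun n => ?_
  induction n with
  | zero => rw [← oms_pi_zero E e, ← Category.assoc, h, zero_comp]
  | succ n ih =>
    have h1 : seqPi E (n + 1) = oneMinusShift C E e ≫ seqPi E (n + 1) + seqPi E n ≫ e n := by
      rw [oms_pi_succ]; abel
    rw [h1, Preadditive.comp_add, ← Category.assoc, h, ← Category.assoc, ih]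
    simp

/-- A map to a term of a tower which becomes zero eventually. -/
inductive EvZero (E : ℕ → C) (e : ∀ n, E n ⟶ E (n + 1)) (K : C) : ∀ n, (K ⟶ E n) → Prop
  | zero (n : ℕ) (x : K ⟶ E n) : x = 0 → EvZero E e K n x
  | step (n : ℕ) (x : K ⟶ E n) : EvZero E e K (n + 1) (x ≫ e n) → EvZero E e K n x

lemma EvZero.comp_zero {E : ℕ → C} {e : ∀ n, E n ⟶ E (n + 1)} {K H : C}
    {π : seqCoprod C E ⟶ H} (hπ : oneMinusShift C E e ≫ π = 0) {n : ℕ} {x : K ⟶ E n}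
    (h : EvZero E e K n x) : x ≫ seqInj C E n ≫ π = 0 := by
  induction h with
  | zero n x hx => rw [hx, Limits.zero_comp]
  | step n x _ ih =>
    have h1 := seqInj_oms E e n
    have h2 : seqInj C E n ≫ π = e n ≫ seqInj C E (n + 1) ≫ π := by
      rw [← sub_eq_zero, ← Category.assoc (e n), ← Preadditive.sub_comp, ← h1, Category.assoc, hπ,
        Limits.comp_zero]
    rw [h2, ← ih, Category.assoc]

lemma hocolim_hom_zero {E : ℕ → C} {e : ∀ n, E n ⟶ E (n + 1)} {H : C}
    {π : seqCoprod C E ⟶ H} {δ : H ⟶ (seqCoprod C E)⟦(1 : ℤ)⟧}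
    (hH : IsHocolim C E e H π δ) {K : C} (hK : IsCompactObj C K)
    (hev : ∀ n (x : K ⟶ E n), EvZero E e K n x) (f : K ⟶ H) : f = 0 := by
  have hH' : Triangle.mk (oneMinusShift C E e) π δ ∈ (distTriang C) := hH
  have h1 : f ≫ δ = 0 := by
    let F := shiftFunctor C (1 : ℤ)
    let ee : (K⟦(-1 : ℤ)⟧)⟦(1 : ℤ)⟧ ≅ K := shiftNegShift K (1 : ℤ)
    let g : K⟦(-1 : ℤ)⟧ ⟶ seqCoprod C E := F.preimage (ee.hom ≫ f ≫ δ)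
    have hg : F.map g = ee.hom ≫ f ≫ δ := F.map_preimage _
    have hg0 : g = 0 := by
      refine oms_inj (compact_shift hK _) E e g ?_
      apply F.map_injective
      have := tz31 hH'
      rw [F.map_comp, hg, F.map_zero, Category.assoc, Category.assoc, this, comp_zero, comp_zero]
    rw [hg0, F.map_zero] at hg
    rw [← cancel_epi ee.hom, ← hg, comp_zero]
  obtain ⟨g, rfl⟩ := ce3 hH' f h1
  obtain ⟨s, x, rfl⟩ := compact_seq hK E g
  rw [Preadditive.sum_comp]
  refine Finset.sum_eq_zero fun i _ => ?_
  rw [Category.assoc]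
  exact (hev i (x i)).comp_zero (tz12 hH')

lemma exists_hocolim (E : ℕ → C) (e : ∀ n, E n ⟶ E (n + 1)) :
    ∃ (H : C) (π : seqCoprod C E ⟶ H) (δ : H ⟶ (seqCoprod C E)⟦(1 : ℤ)⟧),
      IsHocolim C E e H π δ :=
  distinguished_cocone_triangle _

lemma evZero_of_eventually {E : ℕ → C} {e : ∀ n, E n ⟶ E (n + 1)} {K : C} (N : ℕ)
    (h : ∀ n, N ≤ n → ∀ x : K ⟶ E n, x = 0) (n : ℕ) (x : K ⟶ E n) : EvZero E e K n x := by
  have : ∀ k n, N ≤ n + k → ∀ x : K ⟶ E n, EvZero E e K n x := by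
    intro k
    induction k with
    | zero => intro n hn x; exact .zero _ _ (h n hn x)
    | succ k ih => intro n hn x; exact .step _ _ (ih (n + 1) (by omega) _)
  exact this N n (by omega) x

/-- If the hocolim vanishes, every map from a compact object to the tower dies eventually. -/
lemma evZero_of_hocolim_zero {E : ℕ → C} {e : ∀ n, E n ⟶ E (n + 1)} {H : C}
    {π : seqCoprod C E ⟶ H} {δ : H ⟶ (seqCoprod C E)⟦(1 : ℤ)⟧}
    (hH : IsHocolim C E e H π δ) (hz : IsZero H) {K : C} (hK : IsCompactObj C K)
    (f : K ⟶ E 0) : EvZero E e K 0 f := by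
  have hH' : Triangle.mk (oneMinusShift C E e) π δ ∈ (distTriang C) := hH
  obtain ⟨g, hg⟩ := ce2 hH' (f ≫ seqInj C E 0) (hz.eq_of_tgt _ _)
  have h0 : g ≫ seqPi E 0 = f := by
    rw [← oms_pi_zero E e, ← Category.assoc, ← hg, Category.assoc, seqInj_pi, Category.comp_id]
  have hs : ∀ n, g ≫ seqPi E (n + 1) = (g ≫ seqPi E n) ≫ e n := by
    intro n
    have h1 : seqPi E (n + 1) = oneMinusShift C E e ≫ seqPi E (n + 1) + seqPi E n ≫ e n := by
      rw [oms_pi_succ]; abel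
    rw [h1, Preadditive.comp_add, ← Category.assoc, ← hg, Category.assoc,
      seqInj_pi_ne E (Nat.succ_ne_zero n).symm, comp_zero, zero_add, Category.assoc]
  obtain ⟨N, hN⟩ := compact_seq_eventually hK E g
  have : ∀ k n, N ≤ n + k → EvZero E e K n (g ≫ seqPi E n) := by
    intro k
    induction k with
    | zero => intro n hn; exact .zero _ _ (hN n hn)
    | succ k ih => intro n hn; exact .step _ _ (by rw [← hs]; exact ih (n + 1) (by omega))
  rw [← h0]
  exact this N 0 (by omega)

end Aux

set_option linter.unusedSectionVars false
section Aux
variable {C}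

/-! ### Towers killing maps from a family of objects -/

section Tower
variable {J : Type} (Q : J → C)

/-- The coproduct of all maps from the family to `X`. -/
noncomputable def twP (X : C) : C := ∐ fun i : (Σ j, (Q j ⟶ X)) => Q i.1

/-- The canonical map. -/
noncomputable def twA (X : C) : twP Q X ⟶ X := Sigma.desc fun i => i.2

/-- The next object in the tower. -/
noncomputable def twN (X : C) : C := (distinguished_cocone_triangle (twA Q X)).choose

/-- The next map in the tower. -/
noncomputable def twB (X : C) : X ⟶ twN Q X :=
  (distinguished_cocone_triangle (twA Q X)).choose_spec.choose

/-- The connecting map. -/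
noncomputable def twC (X : C) : twN Q X ⟶ (twP Q X)⟦(1 : ℤ)⟧ :=
  (distinguished_cocone_triangle (twA Q X)).choose_spec.choose_spec.choose

lemma tw_dist (X : C) : Triangle.mk (twA Q X) (twB Q X) (twC Q X) ∈ (distTriang C) :=
  (distinguished_cocone_triangle (twA Q X)).choose_spec.choose_spec.choose_spec

/-- The tower. -/
noncomputable def tw (X : C) : ℕ → C
  | 0 => X
  | n + 1 => twN Q (tw X n)

/-- The transition maps of the tower. -/
noncomputable def twE (X : C) (n : ℕ) : tw Q X n ⟶ tw Q X (n + 1) := twB Q (tw Q X n)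

/-- The inclusions into the coproduct of all maps. -/
noncomputable def twI (X : C) (j : J) (x : Q j ⟶ X) : Q j ⟶ twP Q X :=
  Sigma.ι (fun i : (Σ j, (Q j ⟶ X)) => Q i.1) ⟨j, x⟩

lemma twI_twA (X : C) (j : J) (x : Q j ⟶ X) : twI Q X j x ≫ twA Q X = x :=
  Sigma.ι_desc (f := fun i : (Σ j, (Q j ⟶ X)) => Q i.1) (fun i => i.2) ⟨j, x⟩

lemma twP_ext {X Y : C} {f g : twP Q X ⟶ Y}
    (h : ∀ j x, twI Q X j x ≫ f = twI Q X j x ≫ g) : f = g :=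
  Sigma.hom_ext _ _ fun i => h i.1 i.2

lemma compact_twP {K : C} (hK : IsCompactObj C K) (X : C) (g : K ⟶ twP Q X) :
    ∃ (s : Finset (Σ j, (Q j ⟶ X))) (x : ∀ i : (Σ j, (Q j ⟶ X)), K ⟶ Q i.1),
      g = ∑ i ∈ s, x i ≫ twI Q X i.1 i.2 :=
  compact_sum hK (fun i : (Σ j, (Q j ⟶ X)) => Q i.1) g

lemma tw_kill (X : C) (j : J) (x : Q j ⟶ X) : x ≫ twB Q X = 0 := by
  rw [← twI_twA Q X j x, Category.assoc, tz12 (tw_dist Q X), comp_zero]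

lemma tw_ev (X : C) (j : J) (n : ℕ) (x : Q j ⟶ tw Q X n) :
    EvZero (tw Q X) (twE Q X) (Q j) n x :=
  .step _ _ (.zero _ _ (tw_kill Q _ j x))

lemma twP_hom_zero (X : C) {Y : C} (hY : ∀ j, ∀ f : Q j ⟶ Y, f = 0) (f : twP Q X ⟶ Y) :
    f = 0 :=
  twP_ext Q fun j x => by rw [hY _ (twI Q X j x ≫ f), comp_zero]

end Tower

/-! ### Truncation triangles -/

lemma trunc_aux {E : ℕ → C} {e : ∀ n, E n ⟶ E (n + 1)} {v : C} {π : seqCoprod C E ⟶ v}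
    {δ : v ⟶ (seqCoprod C E)⟦(1 : ℤ)⟧} (hH : IsHocolim C E e v π δ) {Y : C}
    (hext : ∀ n (θ : E n ⟶ Y), ∃ θ' : E (n + 1) ⟶ Y, θ = e n ≫ θ')
    (hinj : ∀ n (χ : E (n + 1) ⟶ Y⟦(1 : ℤ)⟧), e n ≫ χ = 0 → χ = 0) :
    (∀ ψ : E 0 ⟶ Y, ∃ ψ' : v ⟶ Y, ψ = (seqInj C E 0 ≫ π) ≫ ψ') ∧
    (∀ χ : v ⟶ Y⟦(1 : ℤ)⟧, (seqInj C E 0 ≫ π) ≫ χ = 0 → χ = 0) := by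
  have hH' : Triangle.mk (oneMinusShift C E e) π δ ∈ (distTriang C) := hH
  choose ex hex using hext
  have hcomp : ∀ n, seqInj C E n ≫ π = e n ≫ seqInj C E (n + 1) ≫ π := by
    intro n
    rw [← sub_eq_zero, ← Category.assoc (e n), ← Preadditive.sub_comp, ← seqInj_oms, Category.assoc,
      tz12 hH', comp_zero]
  constructor
  · intro ψ
    let θ : ∀ n, E n ⟶ Y := fun n => Nat.rec (motive := fun n => E n ⟶ Y) ψ (fun n x => ex n x) n
    have hθ : ∀ n, θ n = e n ≫ θ (n + 1) := fun n => hex n (θ n)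
    obtain ⟨ψ', hψ'⟩ := ye2 hH' (seqDesc E θ) (by
      refine seq_ext fun n => ?_
      rw [← Category.assoc, seqInj_oms, Preadditive.sub_comp, Category.assoc, seqInj_desc,
        seqInj_desc, comp_zero, ← hθ, sub_self])
    refine ⟨ψ', ?_⟩
    rw [Category.assoc, ← hψ', seqInj_desc]
    rfl
  · intro χ hχ
    have h1 : ∀ n, seqInj C E n ≫ π ≫ χ = 0 := by
      intro n
      induction n with
      | zero => rw [← Category.assoc]; exact hχ
      | succ n ih =>
        refine hinj n _ ?_
        rw [← ih, ← Category.assoc _ π χ, ← Category.assoc (e n), ← hcomp, Category.assoc]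
    obtain ⟨μ, hμ⟩ := ye3 hH' χ (seq_ext fun n => by rw [h1, comp_zero])
    obtain ⟨μ', rfl⟩ := (shiftFunctor C (1 : ℤ)).map_surjective μ
    let ν : ∀ n, E n ⟶ Y := fun n => Nat.rec (motive := fun n => E n ⟶ Y) 0
      (fun n x => ex n (x - seqInj C E n ≫ μ')) n
    have hν : ∀ n, ν n - seqInj C E n ≫ μ' = e n ≫ ν (n + 1) := fun n => hex n _
    have h3 : μ' = oneMinusShift C E e ≫ seqDesc E ν := by
      refine seq_ext fun n => ?_
      rw [← Category.assoc, seqInj_oms, Preadditive.sub_comp, Category.assoc, seqInj_desc,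
        seqInj_desc, ← hν]
      abel
    rw [hμ, h3, Functor.map_comp, ← Category.assoc, tz31 hH', zero_comp]

lemma exists_trunc {J : Type} (Q : J → C) (hQ : ∀ j, IsCompactObj C (Q j)) (t : C) :
    ∃ (u v : C) (f : u ⟶ t) (g : t ⟶ v) (h : v ⟶ u⟦(1 : ℤ)⟧),
      Triangle.mk f g h ∈ (distTriang C) ∧
      (∀ Y, (∀ j, ∀ φ : Q j ⟶ Y, φ = 0) → ∀ φ : u ⟶ Y, φ = 0) ∧
      (∀ j, ∀ φ : Q j ⟶ v, φ = 0) := by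
  obtain ⟨v, π, δ, hH⟩ := exists_hocolim (tw Q t) (twE Q t)
  have key : ∀ Y, (∀ j, ∀ φ : Q j ⟶ Y, φ = 0) → 
    (∀ ψ : tw Q t 0 ⟶ Y, ∃ ψ' : v ⟶ Y, ψ = (seqInj C (tw Q t) 0 ≫ π) ≫ ψ') ∧
    (∀ χ : v ⟶ Y⟦(1 : ℤ)⟧, (seqInj C (tw Q t) 0 ≫ π) ≫ χ = 0 → χ = 0) := by
    intro Y hY
    have hP := fun X => twP_hom_zero Q X hY
    refine trunc_aux hH (fun n θ => ye2 (tw_dist Q (tw Q t n)) θ (hP _ _)) (fun n χ hχ => ?_)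
    obtain ⟨κ, hκ⟩ := ye3 (tw_dist Q (tw Q t n)) χ hχ
    obtain ⟨κ', rfl⟩ := (shiftFunctor C (1 : ℤ)).map_surjective κ
    rw [hP _ κ', Functor.map_zero, comp_zero] at hκ
    exact hκ
  have hQv : ∀ j, ∀ φ : Q j ⟶ v, φ = 0 := fun j φ =>
    hocolim_hom_zero hH (hQ j) (fun n x => tw_ev Q t j n x) φ
  change ∀ Y, _ → (∀ ψ : t ⟶ Y, _) ∧ _ at key
  generalize hg : (seqInj C (tw Q t) 0 ≫ π) = g at key
  change t ⟶ v at g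
  obtain ⟨u, f, h, hT⟩ := distinguished_cocone_triangle₁ g
  refine ⟨u, v, f, g, h, hT, ?_, hQv⟩
  intro Y hY φ
  obtain ⟨surj, inj⟩ := key Y hY
  have h4 : h ≫ φ⟦(1 : ℤ)⟧' = 0 := inj _ (by
    have := tz23 hT
    change g ≫ h ≫ _ = _
    rw [← Category.assoc, this, zero_comp]
    rfl)
  obtain ⟨ν, hν⟩ := ye4 hT _ h4
  obtain ⟨ψ, rfl⟩ := (shiftFunctor C (1 : ℤ)).map_surjective ν
  obtain ⟨ψ', hψ'⟩ := surj ψ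
  change ψ = g ≫ ψ' at hψ'
  rw [hψ', ← Functor.map_comp, ← Category.assoc, tz12 hT, zero_comp, Functor.map_zero] at hν
  exact (shiftFunctor C (1 : ℤ)).map_injective (by rw [hν, Functor.map_zero])

/-! ### Compact objects are built from the generator -/

/-- A map factoring through an object of the extension closure. -/
def Fac (U : Set C) {X Y : C} (φ : X ⟶ Y) : Prop :=
  ∃ (W : C) (u : X ⟶ W) (v : W ⟶ Y), extClosure C U W ∧ φ = u ≫ v

lemma Fac.add {U : Set C} {X Y : C} {φ ψ : X ⟶ Y} (h1 : Fac U φ) (h2 : Fac U ψ) :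
    Fac U (φ + ψ) := by
  obtain ⟨W, u, v, hW, rfl⟩ := h1
  obtain ⟨W', u', v', hW', rfl⟩ := h2
  refine ⟨W ⊞ W', biprod.lift u u', biprod.desc v v', ?_, by simp⟩
  exact extClosure.ext _ _ _ (binaryBiproductTriangle_distinguished W W') hW hW'

lemma Fac.zero {U : Set C} {X Y : C} : Fac U (0 : X ⟶ Y) :=
  ⟨_, 0, 0, extClosure.zero (isZero_zero C), by simp⟩

lemma Fac.comp {U : Set C} {X Y Z : C} {φ : X ⟶ Y} (h : Fac U φ) (a : Y ⟶ Z) :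
    Fac U (φ ≫ a) := by
  obtain ⟨W, u, v, hW, rfl⟩ := h
  exact ⟨W, u, v ≫ a, hW, by simp⟩

lemma compact_of_extClosure {U : Set C} (hU : U ⊆ compacts C) {X : C} (h : extClosure C U X) :
    IsCompactObj C X := by
  induction h with
  | of h => exact hU h
  | zero h => exact compact_zero h
  | ext f g h hT _ _ h1 h2 => exact compact_ext hT h1 h2

lemma fac_twP {J : Type} (Q : J → C) {U : Set C} (hU : ∀ j, Q j ∈ U) {K : C}
    (hK : IsCompactObj C K) (X : C) (g : K ⟶ twP Q X) : Fac U g := by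
  classical
  obtain ⟨s, x, rfl⟩ := compact_twP Q hK X g
  induction s using Finset.induction_on with
  | empty => rw [Finset.sum_empty]; exact Fac.zero
  | insert a s ha ih =>
    rw [Finset.sum_insert ha]
    exact Fac.add ⟨_, x a, _, extClosure.of (hU a.1), rfl⟩ ih

lemma fac_step {J : Type} (Q : J → C) {U : Set C} (hU : ∀ j, Q j ∈ U)
    (hUc : U ⊆ compacts C) {K : C} (hK : IsCompactObj C K) (X : C) (x : K ⟶ X)
    (h : Fac U (x ≫ twB Q X)) : Fac U x := by
  have hD := tw_dist Q X
  obtain ⟨W₁, u, v, hW₁, huv⟩ := h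
  obtain ⟨R, q, r, hR⟩ := distinguished_cocone_triangle u
  have hRc : IsCompactObj C R :=
    compact_ext (trot hR) (compact_of_extClosure hUc hW₁) (compact_shift hK 1)
  obtain ⟨θ, hθ⟩ := ye2 hR (v ≫ twC Q X) (by
    rw [← Category.assoc, ← huv, Category.assoc, tz23 hD, comp_zero])
  let S := shiftFunctor C (1 : ℤ)
  let ee : S.obj (R⟦(-1 : ℤ)⟧) ≅ R := shiftNegShift R (1 : ℤ)
  obtain ⟨θ', hθ'⟩ := S.map_surjective (ee.hom ≫ θ)
  obtain ⟨P₀, y, p₀, hP₀, rfl⟩ := fac_twP Q hU (compact_shift hRc (-1)) _ θ'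
  let θ₁ : R ⟶ P₀⟦(1 : ℤ)⟧ := ee.inv ≫ S.map y
  have hθ₁ : θ₁ ≫ p₀⟦(1 : ℤ)⟧' = θ := by
    rw [Category.assoc, ← Functor.map_comp, hθ', Iso.inv_hom_id_assoc]
  obtain ⟨W, i, k, hW⟩ := distinguished_cocone_triangle₂ (q ≫ θ₁)
  obtain ⟨m, hm1, hm2⟩ := tm2 hW hD p₀ v (by rw [Category.assoc, hθ₁, hθ])
  obtain ⟨s, hs⟩ := ce3 hW u (by rw [← Category.assoc, tz12 hR, zero_comp])
  obtain ⟨z, hz⟩ := ce2 hD (x - s ≫ m) (by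
    rw [Preadditive.sub_comp, huv, Category.assoc, ← hm2, ← Category.assoc, ← hs, sub_self])
  have hx : x = s ≫ m + z ≫ twA Q X := by rw [← hz]; abel
  rw [hx]
  exact Fac.add ⟨W, s, m, extClosure.ext _ _ _ hW hP₀ hW₁, rfl⟩
    ((fac_twP Q hU hK _ z).comp _)

lemma fac_of_evZero {J : Type} (Q : J → C) {U : Set C} (hU : ∀ j, Q j ∈ U)
    (hUc : U ⊆ compacts C) {K : C} (hK : IsCompactObj C K) (X : C) {n : ℕ} {x : K ⟶ tw Q X n}
    (h : EvZero (tw Q X) (twE Q X) K n x) : Fac U x := by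
  induction h with
  | zero n x hx => rw [hx]; exact Fac.zero
  | step n x _ ih => exact fac_step Q hU hUc hK _ x ih

lemma mem_smd_of_compact {U : Set C} (hUc : U ⊆ compacts C) {G₀ : C}
    (hgen : IsCompactGenerator C G₀) (hU : ∀ j : ℤ, G₀⟦j⟧ ∈ U) {K : C} (hK : IsCompactObj C K) :
    K ∈ smd C {X | extClosure C U X} := by
  let Q : ℤ → C := fun j => G₀⟦j⟧
  obtain ⟨H, π, δ, hH⟩ := exists_hocolim (tw Q K) (twE Q K)
  have hz : IsZero H := hgen.2 H fun n f =>
    hocolim_hom_zero hH (compact_shift hgen.1 n) (fun m x => tw_ev Q K n m x) f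
  have hev := evZero_of_hocolim_zero hH hz hK (𝟙 K)
  obtain ⟨W, u, v, hW, huv⟩ := fac_of_evZero Q hU hUc hK K hev
  exact ⟨W, hW, u, v, huv.symm⟩

end Aux

set_option linter.unusedSectionVars false
section Aux
variable {C}

/-! ### Vanishing of Hom and shifts -/

/-- There are no non-zero maps from `X` to `Y`. -/
def HZ (X Y : C) : Prop := ∀ f : X ⟶ Y, f = 0

lemma HZ.retract_src {X X' Y : C} (h : HZ X Y) (i : X' ⟶ X) (r : X ⟶ X') (hir : i ≫ r = 𝟙 X') :
    HZ X' Y := fun f => by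
  rw [← Category.id_comp f, ← hir, Category.assoc, h (r ≫ f), comp_zero]

lemma HZ.iso_src {X X' Y : C} (h : HZ X Y) (e : X' ≅ X) : HZ X' Y :=
  h.retract_src e.hom e.inv e.hom_inv_id

lemma HZ.iso_tgt {X Y Y' : C} (h : HZ X Y) (e : Y' ≅ Y) : HZ X Y' := fun f => by
  rw [← Category.comp_id f, ← e.hom_inv_id, ← Category.assoc, h (f ≫ e.hom), zero_comp]

lemma HZ.shift {X Y : C} (h : HZ X Y) (n : ℤ) : HZ (X⟦n⟧) (Y⟦n⟧) := fun f => by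
  obtain ⟨g, rfl⟩ := (shiftFunctor C n).map_surjective f
  rw [h g, Functor.map_zero]

lemma HZ.ext_src {X Y Z T : C} {f : X ⟶ Y} {g : Y ⟶ Z} {h : Z ⟶ X⟦(1 : ℤ)⟧}
    (hT : Triangle.mk f g h ∈ (distTriang C)) (h1 : HZ X T) (h2 : HZ Z T) : HZ Y T := fun φ => by
  obtain ⟨ψ, rfl⟩ := ye2 hT φ (h1 _)
  rw [h2 ψ, comp_zero]

lemma HZ.coprod {α : Type v} {f : α → C} {T : C} (h : ∀ i, HZ (f i) T) : HZ (∐ f) T := fun φ =>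
  Sigma.hom_ext _ _ fun i => by rw [h i (Sigma.ι f i ≫ φ), comp_zero]

lemma HZ.of_isZero {X T : C} (h : IsZero X) : HZ X T := fun _ => h.eq_of_src _ _

lemma HZ.extClosure {U : Set C} {T X : C} (hU : ∀ X ∈ U, HZ X T) (h : extClosure C U X) :
    HZ X T := by
  induction h with
  | of h => exact hU _ h
  | zero h => exact .of_isZero h
  | ext f g h hT _ _ h1 h2 => exact .ext_src hT h1 h2

/-- Composition of shifts. -/
noncomputable def shAdd (X : C) {a b c : ℤ} (h : a + b = c) : X⟦a⟧⟦b⟧ ≅ X⟦c⟧ :=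
  ((shiftFunctorAdd' C a b c h).app X).symm

/-- Shift by zero. -/
noncomputable def shZero (X : C) {a : ℤ} (h : a = 0) : X⟦a⟧ ≅ X :=
  (shiftFunctorZero' C a h).app X

lemma HZ.shift_left {X Y : C} {n m : ℤ} (hnm : n + m = 0) (h : HZ (X⟦n⟧) Y) : HZ X (Y⟦m⟧) :=
  (h.shift m).iso_src ((shAdd X hnm).trans (shZero X rfl)).symm

lemma HZ.shift_right {X Y : C} {n m : ℤ} (hnm : m + n = 0) (h : HZ X (Y⟦m⟧)) : HZ (X⟦n⟧) Y :=
  (h.shift n).iso_tgt ((shAdd Y hnm).trans (shZero Y rfl)).symm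

lemma mem_shiftSet {A : Set C} (hA : ∀ ⦃X Y : C⦄, (X ≅ Y) → X ∈ A → Y ∈ A) {n m : ℤ}
    (hnm : n + m = 0) {X : C} : X ∈ shiftSet C n A ↔ X⟦m⟧ ∈ A := by
  constructor
  · rintro ⟨a, ha, ⟨e⟩⟩
    exact hA (((shiftFunctor C m).mapIso e).trans ((shAdd a hnm).trans (shZero a rfl))).symm ha
  · intro h
    exact ⟨_, h, ⟨((shAdd X (by omega : m + n = 0)).trans (shZero X rfl)).symm⟩⟩

/-! ### Monotonicity and shifts of closures -/

lemma extClosure_mono {U U' : Set C} (h : U ⊆ U') {X : C} (hX : extClosure C U X) :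
    extClosure C U' X := by
  induction hX with
  | of hX => exact .of (h hX)
  | zero hX => exact .zero hX
  | ext f g h hT _ _ h1 h2 => exact .ext f g h hT h1 h2

lemma bigClosure_mono {U U' : Set C} (h : U ⊆ U') {X : C} (hX : bigClosure C U X) :
    bigClosure C U' X := by
  induction hX with
  | of hX => exact .of (h hX)
  | zero hX => exact .zero hX
  | coprod f _ e ih => exact .coprod f ih e
  | ext f g h hT _ _ h1 h2 => exact .ext f g h hT h1 h2
  | retract i r hir _ ih => exact .retract i r hir ih

lemma extClosure_shift {U U' : Set C} (n : ℤ) (h : ∀ X ∈ U, X⟦n⟧ ∈ U') {X : C}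
    (hX : extClosure C U X) : extClosure C U' (X⟦n⟧) := by
  induction hX with
  | of hX => exact .of (h _ hX)
  | zero hX => exact .zero ((shiftFunctor C n).map_isZero hX)
  | ext f g h hT _ _ h1 h2 =>
    obtain ⟨f', g', h', hT'⟩ := dist_shift hT n
    exact .ext f' g' h' hT' h1 h2

lemma bigClosure_shift {U U' : Set C} (n : ℤ) (h : ∀ X ∈ U, X⟦n⟧ ∈ U') {X : C}
    (hX : bigClosure C U X) : bigClosure C U' (X⟦n⟧) := by
  induction hX with
  | of hX => exact .of (h _ hX)
  | zero hX => exact .zero ((shiftFunctor C n).map_isZero hX)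
  | coprod f _ e ih =>
    exact .coprod (fun i => (f i)⟦n⟧) ih
      (((shiftFunctor C n).mapIso e).trans (PreservesCoproduct.iso (shiftFunctor C n) f))
  | ext f g h hT _ _ h1 h2 =>
    obtain ⟨f', g', h', hT'⟩ := dist_shift hT n
    exact .ext f' g' h' hT' h1 h2
  | retract i r hir _ ih =>
    exact .retract (i⟦n⟧') (r⟦n⟧') (by rw [← Functor.map_comp, hir, CategoryTheory.Functor.map_id]) ih

lemma coprodPowBig_mono {U U' : Set C} (h : U ⊆ U') (k : ℕ) :
    coprodPowBig C U k ⊆ coprodPowBig C U' k := by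
  induction k with
  | zero => exact fun _ h => h
  | succ k ih =>
    rintro Y ⟨X, Z, f, g, d, hT, ⟨α, φ, hφ, e⟩, hZ⟩
    exact ⟨X, Z, f, g, d, hT, ⟨α, φ, fun i => h (hφ i), e⟩, ih hZ⟩

lemma coprodPowBig_shift {U U' : Set C} (n : ℤ) (h : ∀ X ∈ U, X⟦n⟧ ∈ U') (k : ℕ) :
    ∀ X ∈ coprodPowBig C U k, X⟦n⟧ ∈ coprodPowBig C U' k := by
  induction k with
  | zero => exact fun _ h => (shiftFunctor C n).map_isZero h
  | succ k ih =>
    rintro Y ⟨X, Z, f, g, d, hT, ⟨α, φ, hφ, ⟨e⟩⟩, hZ⟩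
    obtain ⟨f', g', h', hT'⟩ := dist_shift hT n
    exact ⟨_, _, f', g', h', hT', ⟨α, fun i => (φ i)⟦n⟧, fun i => h _ (hφ i),
      ⟨((shiftFunctor C n).mapIso e).trans (PreservesCoproduct.iso (shiftFunctor C n) φ)⟩⟩,
      ih _ hZ⟩

lemma coprodPowBig_big {U : Set C} (k : ℕ) : ∀ X ∈ coprodPowBig C U k, bigClosure C U X := by
  induction k with
  | zero => exact fun _ h => .zero h
  | succ k ih =>
    rintro Y ⟨X, Z, f, g, d, hT, ⟨α, φ, hφ, ⟨e⟩⟩, hZ⟩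
    exact .ext f g d hT (.coprod φ (fun i => .of (hφ i)) e) (ih _ hZ)

lemma smd_mono {U U' : Set C} (h : U ⊆ U') : smd C U ⊆ smd C U' := by
  rintro X ⟨Y, hY, r⟩
  exact ⟨Y, h hY, r⟩

lemma smd_shift {U U' : Set C} (n : ℤ) (h : ∀ X ∈ U, X⟦n⟧ ∈ U') :
    ∀ X ∈ smd C U, X⟦n⟧ ∈ smd C U' := by
  rintro X ⟨Y, hY, i, r, hir⟩
  exact ⟨_, h _ hY, i⟦n⟧', r⟦n⟧', by rw [← Functor.map_comp, hir, CategoryTheory.Functor.map_id]⟩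

lemma smd_big {U : Set C} (k : ℕ) : ∀ X ∈ smd C (coprodPowBig C U k), bigClosure C U X := by
  rintro X ⟨Y, hY, i, r, hir⟩
  exact .retract i r hir (coprodPowBig_big k _ hY)

/-! ### The generating sequence -/

lemma mem_singletonShift (G₀ : C) (j : ℤ) : G₀⟦j⟧ ∈ singletonShift C G₀ j := ⟨Iso.refl _⟩

lemma singletonShift_shift (G₀ : C) {j n k : ℤ} (h : j + n = k) {X : C}
    (hX : X ∈ singletonShift C G₀ j) : X⟦n⟧ ∈ singletonShift C G₀ k := by
  obtain ⟨e⟩ := hX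
  exact ⟨((shiftFunctor C n).mapIso e).trans (shAdd G₀ h)⟩

lemma mem_unionIcc {G : ℤ → Set C} {a b : ℤ} {X : C} :
    X ∈ unionIcc C G a b ↔ ∃ m, a ≤ m ∧ m ≤ b ∧ X ∈ G m := by
  simp [unionIcc, and_assoc]

lemma mem_unionIic {G : ℤ → Set C} {b : ℤ} {X : C} :
    X ∈ unionIic C G b ↔ ∃ m, m ≤ b ∧ X ∈ G m := by
  simp [unionIic]

lemma mem_unionAll {G : ℤ → Set C} {X : C} : X ∈ unionAll C G ↔ ∃ m, X ∈ G m := by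
  simp [unionAll]

lemma genSeq_compact {G₀ : C} (hc : IsCompactObj C G₀) (i : ℤ) : genSeqNeg C G₀ i ⊆ compacts C := by
  rintro X ⟨e⟩
  exact compact_iso e (compact_shift hc _)

lemma isGenSeq {G₀ : C} (hgen : IsCompactGenerator C G₀) : IsGenSeq C (genSeqNeg C G₀) := by
  have hU : unionAll C (genSeqNeg C G₀) ⊆ compacts C := by
    intro X hX
    obtain ⟨m, hm⟩ := mem_unionAll.1 hX
    exact genSeq_compact hgen.1 m hm
  refine ⟨⟨genSeq_compact hgen.1, Set.Subset.antisymm ?_ ?_⟩, ?_⟩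
  · rintro X ⟨Y, hY, i, r, hir⟩
    exact compact_retract i r hir (compact_of_extClosure hU hY)
  · intro K hK
    refine mem_smd_of_compact hU hgen (fun j => mem_unionAll.2 ⟨-j, ?_⟩) hK
    have := mem_singletonShift G₀ (- -j)
    rw [neg_neg] at this
    change _ ∈ singletonShift C G₀ (- -j)
    rw [neg_neg]
    exact this
  · intro n X hX
    have key : ∃ m, n - 1 ≤ m ∧ m ≤ n + 1 ∧ X ∈ genSeqNeg C G₀ m := by
      rcases hX with (⟨a, ha, ⟨e⟩⟩ | hX) | ⟨a, ha, ⟨e⟩⟩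
      · obtain ⟨e'⟩ := singletonShift_shift G₀ (by omega : -n + -1 = -(n + 1)) ha
        exact ⟨n + 1, by omega, by omega, ⟨e.trans e'⟩⟩
      · exact ⟨n, by omega, by omega, hX⟩
      · obtain ⟨e'⟩ := singletonShift_shift G₀ (by omega : -n + 1 = -(n - 1)) ha
        exact ⟨n - 1, by omega, by omega, ⟨e.trans e'⟩⟩
    exact ⟨X, .of (mem_unionIcc.2 key), 𝟙 X, 𝟙 X, Category.comp_id _⟩

/-- Objects receiving no maps from the generator shifted by at least `a`. -/
def Sn (G₀ : C) (a : ℤ) : Set C := {Y | ∀ m, a ≤ m → HZ (G₀⟦m⟧) Y}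

lemma mem_MG {G₀ : C} {a m : ℤ} (h : a ≤ m) : G₀⟦m⟧ ∈ MG C (genSeqNeg C G₀) a := by
  refine ⟨_, .of (mem_unionIic.2 ⟨-m, by omega, ?_⟩), 𝟙 _, 𝟙 _, Category.comp_id _⟩
  change _ ∈ singletonShift C G₀ (- -m)
  rw [neg_neg]
  exact mem_singletonShift G₀ m

lemma MG_HZ {G₀ X Y : C} {a : ℤ} (hX : X ∈ MG C (genSeqNeg C G₀) a) (hY : Y ∈ Sn G₀ a) :
    HZ X Y := by
  obtain ⟨Z, hZ, i, r, hir⟩ := hX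
  refine HZ.retract_src (HZ.extClosure (fun T hT => ?_) hZ) i r hir
  obtain ⟨m, hm, ⟨e⟩⟩ := mem_unionIic.1 hT
  exact (hY (-m) (by omega)).iso_src e

lemma MG_shift {G₀ X : C} {a b n : ℤ} (h : a + n = b) (hX : X ∈ MG C (genSeqNeg C G₀) a) :
    X⟦n⟧ ∈ MG C (genSeqNeg C G₀) b := by
  refine smd_shift n (fun T hT => extClosure_shift n (fun S hS => ?_) hT) X hX
  obtain ⟨m, hm, hm'⟩ := mem_unionIic.1 hS
  exact mem_unionIic.2 ⟨m - n, by omega, singletonShift_shift G₀ (by omega) hm'⟩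

lemma MG_compact {G₀ X : C} (hc : IsCompactObj C G₀) {a : ℤ}
    (hX : X ∈ MG C (genSeqNeg C G₀) a) : IsCompactObj C X := by
  obtain ⟨Z, hZ, i, r, hir⟩ := hX
  refine compact_retract i r hir (compact_of_extClosure (fun T hT => ?_) hZ)
  obtain ⟨m, hm, hm'⟩ := mem_unionIic.1 hT
  exact genSeq_compact hc _ hm'

lemma cond0_aux {G₀ : C} {A : ℤ} (hA : 0 < A) (i : ℤ) : MG C (genSeqNeg C G₀) i ⊆
    ⋃ n ∈ {n : ℤ | |n| ≤ A}, shiftSet C n (MG C (genSeqNeg C G₀) (i + 1)) := by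
  intro X hX
  simp only [Set.mem_iUnion]
  refine ⟨-1, ?_, X⟦(1 : ℤ)⟧, MG_shift rfl hX, ⟨((shAdd X (by omega : (1 : ℤ) + -1 = 0)).trans
    (shZero X rfl)).symm⟩⟩
  simp; omega

end Aux

set_option linter.unusedSectionVars false
section Aux
variable {C}

/-! ### From approximability to approximability with respect to the generating sequence -/

lemma tstr_mem {U V : Set C} (h : IsTStructure C U V) {X : C}
    (hX : ∀ B ∈ shiftSet C (-1) V, HZ X B) : X ∈ U := by
  obtain ⟨u, v, f, g, d, hT, hu, hv⟩ := h.exists_triangle X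
  have hg : g = 0 := hX v hv g
  have huv : HZ (u⟦(1 : ℤ)⟧) v := h.orthogonal _ (h.shift_le ⟨u, hu, ⟨Iso.refl _⟩⟩) _ hv
  obtain ⟨ψ, hψ⟩ := ye3 hT (𝟙 v) (by rw [hg, zero_comp])
  have hv0 : IsZero v := by
    rw [IsZero.iff_id_eq_zero, hψ, huv ψ, comp_zero]
  have : IsIso f := (Triangle.isZero₃_iff_isIso₁ _ hT).1 hv0
  exact h.iso_closed_le (asIso f) hu

lemma tstr_shift {U V : Set C} (h : IsTStructure C U V) (n : ℕ) {X : C} (hX : X ∈ U) :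
    X⟦(n : ℤ)⟧ ∈ U := by
  induction n with
  | zero => exact h.iso_closed_le (shZero X rfl).symm hX
  | succ n ih =>
    exact h.iso_closed_le (shAdd X (by push_cast; rfl)) (h.shift_le ⟨_, ih, ⟨Iso.refl _⟩⟩)

/-- The metric attached to the aisle. -/
def Raisle (U : Set C) (i : ℤ) : Set C := {X | X⟦(-i)⟧ ∈ U}

lemma Raisle_shift {U V : Set C} (h : IsTStructure C U V) {i n j : ℤ} {a X : C}
    (ha : a ∈ Raisle U i) (e : X ≅ a⟦n⟧) (hj : j ≤ i + n) : X ∈ Raisle U j := by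
  obtain ⟨k, hk⟩ := Int.eq_ofNat_of_zero_le (by omega : 0 ≤ n - j + i)
  have h1 : (a⟦(-i)⟧)⟦(k : ℤ)⟧ ∈ U := tstr_shift h k ha
  exact h.iso_closed_le ((((shiftFunctor C (-j)).mapIso e).trans
    (shAdd a (rfl : n + -j = _))).trans (shAdd a (by omega : -i + (k : ℤ) = n + -j)).symm).symm h1

lemma Raisle_zero {U V : Set C} (h : IsTStructure C U V) {X : C} (hX : X ∈ U) : X ∈ Raisle U 0 :=
  h.iso_closed_le (shZero X (by simp)).symm hX

lemma Raisle_orth {U V : Set C} (h : IsTStructure C U V) (i : ℤ) :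
    lOrth C (rOrth C (Raisle U i)) = Raisle U i := by
  refine Set.Subset.antisymm (fun X hX => ?_) (fun X hX Y hY f => hY X hX f)
  refine tstr_mem h fun B hB => ?_
  refine HZ.shift_right (m := i) (by omega) (hX _ fun a ha => ?_)
  exact HZ.shift_left (n := -i) (by omega) (h.orthogonal _ ha _ hB)

lemma Raisle_metric {U V : Set C} (h : IsTStructure C U V) : IsOrthMetric C (Raisle U) := by
  refine ⟨⟨?_, ?_, ?_, ?_, ?_, ?_⟩, Raisle_orth h⟩
  · intro n X hX
    rw [← Raisle_orth h]
    exact fun _ _ _ => hX.eq_of_src _ _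
  · intro n X Y e hX
    exact h.iso_closed_le ((shiftFunctor C (-n)).mapIso e) hX
  · rintro n Y ⟨X, Z, f, g, d, hT, hX, hZ⟩
    rw [← Raisle_orth h]
    exact fun T hT' => HZ.ext_src hT (hT' _ hX) (hT' _ hZ)
  · rintro n X ⟨a, ha, ⟨e⟩⟩
    exact Raisle_shift h ha e (by omega)
  · intro n X hX
    exact Raisle_shift h hX (shZero X rfl).symm (by omega)
  · rintro n X ⟨a, ha, ⟨e⟩⟩
    exact Raisle_shift h ha e (by omega)

lemma Raisle_hom {G₀ : C} {A : ℤ} {U V : Set C} (h : IsTStructure C U V)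
    (h2 : ∀ i : ℤ, A ≤ i → ∀ u ∈ U, ∀ f : (shiftFunctor C (-i)).obj G₀ ⟶ u, f = 0)
    (n i : ℤ) (hni : A ≤ n + i) : homZero C (genSeqNeg C G₀ n) (Raisle U i) := by
  rintro X ⟨e⟩ F hF
  have h3 : HZ (G₀⟦(-(n + i))⟧) (F⟦(-i)⟧) := h2 _ hni _ hF
  exact ((h3.shift i).iso_src (e.trans (shAdd G₀ (by omega)).symm)).iso_tgt
    ((shAdd F (by omega : -i + i = 0)).trans (shZero F rfl)).symm

lemma Raisle_pre {G₀ : C} (hc : IsCompactObj C G₀) {A : ℤ} (hA : 0 < A) {U V : Set C}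
    (h : IsTStructure C U V) (h1 : G₀⟦A⟧ ∈ U)
    (h2 : ∀ i : ℤ, A ≤ i → ∀ u ∈ U, ∀ f : (shiftFunctor C (-i)).obj G₀ ⟶ u, f = 0) :
    IsGPreApprox C (genSeqNeg C G₀) (Raisle U) A := by
  refine ⟨Raisle_metric h, hA, cond0_aux hA, ?_, ?_⟩
  · intro i X hX
    refine ⟨?_, MG_compact hc hX⟩
    rw [← Raisle_orth h]
    intro B hB
    refine MG_HZ hX fun m hm => hB _ ?_
    exact Raisle_shift h (Raisle_zero h h1) (shAdd G₀ (by omega : A + (m - A) = m)).symm (by omega)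
  · intro n
    exact ⟨A - n, fun i hi => Raisle_hom h h2 n i (by omega)⟩

lemma Raisle_approx {U V : Set C} (h : IsTStructure C U V) {S S' : Set C} (i : ℤ)
    (hS : ∀ E ∈ S, E⟦i⟧ ∈ S') (happ : ∀ F ∈ U, approxTriangle C F S (shiftSet C 1 U))
    (F : C) (hF : F ∈ Raisle U i) : approxTriangle C F S' (Raisle U (i + 1)) := by
  obtain ⟨E, D, f, g, d, hT, hE, ⟨a, ha, ⟨e⟩⟩⟩ := happ _ hF
  obtain ⟨f', g', d', hT'⟩ := dist_shift hT i
  refine ⟨_, _, _, _, _, dist_iso₂ hT' ((shAdd F (by omega : -i + i = 0)).trans (shZero F rfl)),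
    hS E hE, ?_⟩
  exact Raisle_shift h (Raisle_zero h ha) (((shiftFunctor C i).mapIso e).trans
    (shAdd a (rfl : 1 + i = _))) (by omega)

lemma unionIcc_shift {G₀ : C} {A i : ℤ} : ∀ X ∈ unionIcc C (genSeqPos C G₀) (-A) A,
    X⟦i⟧ ∈ unionIcc C (genSeqNeg C G₀) (-A - i) (A - i) := by
  intro X hX
  obtain ⟨m, h1, h2, h3⟩ := mem_unionIcc.1 hX
  exact mem_unionIcc.2 ⟨-(m + i), by omega, by omega, singletonShift_shift G₀ (by omega) h3⟩

lemma weak_forward {G₀ : C} (hc : IsCompactObj C G₀) (H : WeaklyApproximable C G₀) :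
    ∃ (Rm : ℤ → Set C) (A : ℤ), IsWeakGApprox C (genSeqNeg C G₀) Rm A := by
  obtain ⟨A, U, V, hA, h, h1, h2, h3⟩ := H
  exact ⟨Raisle U, A, Raisle_pre hc hA h h1 h2, Raisle_hom h h2, fun i =>
    Raisle_approx h i (fun E hE => bigClosure_shift i unionIcc_shift hE) h3⟩

lemma strong_forward {G₀ : C} (hc : IsCompactObj C G₀) (H : Approximable C G₀) :
    ∃ (Rm : ℤ → Set C) (A : ℤ), IsGApprox C (genSeqNeg C G₀) Rm A := by
  obtain ⟨A, U, V, hA, h, h1, h2, h3⟩ := H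
  refine ⟨Raisle U, A, ⟨Raisle_pre hc hA h h1 h2, Raisle_hom h h2, fun i =>
    Raisle_approx h i (fun E hE => bigClosure_shift i unionIcc_shift (smd_big _ _ hE)) h3⟩, fun i =>
    Raisle_approx h i (smd_shift i (coprodPowBig_shift i unionIcc_shift _)) h3⟩

end Aux

set_option linter.unusedSectionVars false
section Aux
variable {C}

/-! ### Approximating by extensions of bounded length -/

lemma good_of_zero {W F Y : C} (hW : IsZero W) (p : W ⟶ F) (h : HZ F Y) : Good p Y :=
  ⟨fun ψ _ => h ψ, fun _ => ⟨0, ((shiftFunctor C (1 : ℤ)).map_isZero hW).eq_of_src _ _⟩⟩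

lemma star_smd {P Q : Set C} {X W W' : C} {i : X ⟶ W} {q : W ⟶ W'} {t : W' ⟶ X⟦(1 : ℤ)⟧}
    (hT : Triangle.mk i q t ∈ (distTriang C)) (hX : X ∈ P) (hW' : W' ∈ smd C Q) :
    W ∈ smd C (starSet C P Q) := by
  obtain ⟨Y, hY, j, r, hjr⟩ := hW'
  obtain ⟨W₂, i₂, q₂, hT₂⟩ := distinguished_cocone_triangle₂ (r ≫ t)
  obtain ⟨a, ha1, ha2⟩ := tm2 hT hT₂ (𝟙 X) j (by
    rw [CategoryTheory.Functor.map_id, Category.comp_id, ← Category.assoc, hjr, Category.id_comp])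
  obtain ⟨b, hb1, hb2⟩ := tm2 hT₂ hT (𝟙 X) r (by
    rw [CategoryTheory.Functor.map_id, Category.comp_id])
  rw [Category.id_comp] at ha1 hb1
  have hab1 : i ≫ (a ≫ b) = 𝟙 X ≫ i := by rw [← Category.assoc, ha1, hb1, Category.id_comp]
  have hab2 : q ≫ 𝟙 W' = (a ≫ b) ≫ q := by
    rw [Category.assoc, ← hb2, ← Category.assoc, ← ha2, Category.assoc, hjr]
  let φ : Triangle.mk i q t ⟶ Triangle.mk i q t :=
    { hom₁ := 𝟙 X, hom₂ := a ≫ b, hom₃ := 𝟙 W', comm₁ := hab1, comm₂ := hab2,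
      comm₃ := by
        change t ≫ (𝟙 X)⟦(1 : ℤ)⟧' = 𝟙 W' ≫ t
        rw [CategoryTheory.Functor.map_id, Category.comp_id, Category.id_comp] }
  have : IsIso φ.hom₂ := isIso₂_of_isIso₁₃ φ hT hT
    (inferInstanceAs (IsIso (𝟙 X))) (inferInstanceAs (IsIso (𝟙 W')))
  have h3 : IsIso (a ≫ b) := this
  exact ⟨W₂, ⟨X, Y, i₂, q₂, _, hT₂, hX, hY⟩, a, b ≫ inv (a ≫ b), by
    rw [← Category.assoc, IsIso.hom_inv_id]⟩

lemma smd_smd {P : Set C} {X Y : C} (hY : Y ∈ smd C P) (i : X ⟶ Y) (r : Y ⟶ X)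
    (h : i ≫ r = 𝟙 X) : X ∈ smd C P := by
  obtain ⟨Z, hZ, j, s, hjs⟩ := hY
  refine ⟨Z, hZ, i ≫ j, s ≫ r, ?_⟩
  rw [Category.assoc, ← Category.assoc j, hjs, Category.id_comp, h]

/-- `F` is approximated, relative to `S`, by an object of length at most `n`. -/
def App (Us S : Set C) (n : ℕ) (F : C) : Prop :=
  ∃ (W : C) (p : W ⟶ F), W ∈ smd C (coprodPowBig C Us n) ∧ ∀ Y ∈ S, Good p Y

lemma app_lift {Us S B : Set C} {n : ℕ} (hB : ∀ D ∈ lOrth C B, App Us S n D) (m : ℕ) :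
    ∀ (E F : C) (f : E ⟶ F), E ∈ coprodPowBig C Us m → (∀ Y ∈ B, Good f Y) →
      ∃ (W : C) (p : W ⟶ F) (s : E ⟶ W), W ∈ smd C (coprodPowBig C Us (m + n)) ∧ s ≫ p = f ∧
        ∀ Y ∈ S, Good p Y := by
  induction m with
  | zero =>
    intro E F f hE hf
    have hE0 : IsZero E := hE
    obtain ⟨W, p, hW, hp⟩ := hB F fun Y hY ψ => (hf Y hY).1 ψ (hE0.eq_of_src _ _)
    exact ⟨W, p, 0, by rwa [Nat.zero_add], hE0.eq_of_src _ _, hp⟩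
  | succ m ih =>
    rintro E F f ⟨x, E', i, q, d, hT, hx, hE'⟩ hf
    obtain ⟨F₁, b, c, hF⟩ := distinguished_cocone_triangle (i ≫ f)
    obtain ⟨f', h1, h2, hg⟩ := good_quot hT hF
    obtain ⟨W', p', s', hW', hs', hp'⟩ := ih E' F₁ f' hE' (fun Y hY => hg Y (hf Y hY))
    obtain ⟨W, i', q', p, hW, hip, hpb, hgp⟩ := good_ext hF p'
    obtain ⟨s₀, hs₀⟩ := ce3 hW (q ≫ s') (by
      rw [Category.assoc, ← Category.assoc s', hs', h2, tz23 hT])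
    obtain ⟨z, hz⟩ := ce2 hF (f - s₀ ≫ p) (by
      rw [Preadditive.sub_comp, Category.assoc, hpb, ← Category.assoc, ← hs₀, Category.assoc, hs',
        h1, sub_self])
    refine ⟨W, p, s₀ + z ≫ i', ?_, ?_, fun Y hY => hgp Y (hp' Y hY)⟩
    · rw [Nat.succ_add_eq_add_succ]
      exact star_smd hW hx hW'
    · rw [Preadditive.add_comp, Category.assoc, hip, ← hz]
      abel

lemma app_smd {Us S B : Set C} {n m : ℕ} (hB : ∀ D ∈ lOrth C B, App Us S n D)
    {E F : C} (f : E ⟶ F) (hE : E ∈ smd C (coprodPowBig C Us m)) (hf : ∀ Y ∈ B, Good f Y) :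
    App Us S (m + n) F := by
  obtain ⟨E2, hE2, j, r, hjr⟩ := hE
  obtain ⟨Z, g, d, hT⟩ := distinguished_cocone_triangle j
  have hjg := tz12 hT
  have hd : d = 0 := by
    have h1 := tz31 hT
    have h2 : d ≫ (j ≫ r)⟦(1 : ℤ)⟧' = 0 := by
      rw [Functor.map_comp, ← Category.assoc, h1, zero_comp]
    rwa [hjr, CategoryTheory.Functor.map_id, Category.comp_id] at h2
  obtain ⟨σ, hσ⟩ := ye2 hT (𝟙 E2 - r ≫ j) (by
    rw [Preadditive.comp_sub, ← Category.assoc, hjr, Category.comp_id, Category.id_comp, sub_self])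
  have hgepi : ∀ {T : C} (χ : Z ⟶ T), g ≫ χ = 0 → χ = 0 := by
    intro T χ hχ
    obtain ⟨ψ, rfl⟩ := ye3 hT χ hχ
    rw [hd, zero_comp]
  have hσg : σ ≫ g = 𝟙 Z := by
    rw [← sub_eq_zero]
    apply hgepi
    rw [Preadditive.comp_sub, ← Category.assoc, ← hσ, Preadditive.sub_comp, Category.assoc, hjg]
    simp
  have hσr : σ ≫ r = 0 := by
    apply hgepi
    rw [← Category.assoc, ← hσ, Preadditive.sub_comp, Category.assoc, hjr]
    simp
  let f2 : E2 ⟶ F ⊞ Z := biprod.lift (r ≫ f) g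
  have hf2 : ∀ Y ∈ B, Good f2 Y := by
    intro Y hY
    have hG := hf Y hY
    constructor
    · intro ψ hψ
      have e1 : r ≫ f ≫ biprod.inl ≫ ψ + g ≫ biprod.inr ≫ ψ = 0 := by
        rw [← hψ]
        simp only [f2, biprod.lift_eq, Preadditive.add_comp, Category.assoc]
      have e2 : biprod.inl ≫ ψ = 0 := by
        apply hG.1
        have := congrArg (fun k => j ≫ k) e1
        simp only [Preadditive.comp_add, comp_zero] at this
        rw [← Category.assoc, hjr, ← Category.assoc j g, hjg, zero_comp, add_zero,
          Category.id_comp] at this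
        exact this
      rw [e2, comp_zero, comp_zero, zero_add] at e1
      apply biprod.hom_ext'
      · rw [e2, comp_zero]
      · rw [hgepi _ e1, comp_zero]
    · intro μ
      obtain ⟨ν₁, hν₁⟩ := hG.2 (j⟦(1 : ℤ)⟧' ≫ μ)
      let Sh := shiftFunctor C (1 : ℤ)
      refine ⟨Sh.map biprod.fst ≫ ν₁ + Sh.map biprod.snd ≫ Sh.map σ ≫ μ, ?_⟩
      have e1 : μ = Sh.map (r ≫ j) ≫ μ + Sh.map (g ≫ σ) ≫ μ := by
        rw [← Preadditive.add_comp, ← Functor.map_add, ← hσ, add_sub_cancel,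
          CategoryTheory.Functor.map_id, Category.id_comp]
      rw [Preadditive.comp_add, ← Category.assoc, ← Category.assoc (f2⟦(1 : ℤ)⟧'), ← Functor.map_comp,
        ← Functor.map_comp, biprod.lift_fst, biprod.lift_snd, ← Category.assoc (Sh.map g),
        ← Functor.map_comp, Functor.map_comp, Category.assoc, ← hν₁, ← Category.assoc,
        ← Functor.map_comp]
      exact e1
  obtain ⟨W, p, s, hW, hsp, hp⟩ := app_lift hB m E2 (F ⊞ Z) f2 hE2 hf2
  have hζ : (σ ≫ s) ≫ p = biprod.inr := by
    rw [Category.assoc, hsp]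
    apply biprod.hom_ext
    · rw [Category.assoc, biprod.lift_fst, ← Category.assoc, hσr, zero_comp, biprod.inr_fst]
    · rw [Category.assoc, biprod.lift_snd, hσg, biprod.inr_snd]
  generalize σ ≫ s = ζ at hζ
  let ρ : W ⟶ Z := p ≫ biprod.snd
  have hζρ : ζ ≫ ρ = 𝟙 Z := by rw [← Category.assoc, hζ, biprod.inr_snd]
  obtain ⟨W₀, k, d₀, hT₀⟩ := distinguished_cocone_triangle₁ ρ
  have hkρ := tz12 hT₀
  have hd₀ : d₀ = 0 := by
    rw [← Category.id_comp d₀, ← hζρ, Category.assoc, tz23 hT₀, comp_zero]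
  have hk : Mono k := Triangle.mono₁ _ hT₀ hd₀
  obtain ⟨κ, hκ⟩ := ce2 hT₀ (𝟙 W - ρ ≫ ζ) (by
    rw [Preadditive.sub_comp, Category.assoc, hζρ, Category.id_comp, Category.comp_id, sub_self])
  have hkκ : k ≫ κ = 𝟙 W₀ := by
    rw [← cancel_mono k, Category.assoc, ← hκ, Preadditive.comp_sub, ← Category.assoc, hkρ]
    simp
  have hpdec : p = (p ≫ biprod.fst) ≫ biprod.inl + ρ ≫ biprod.inr := by
    apply biprod.hom_ext <;> simp [ρ]
  refine ⟨W₀, k ≫ p ≫ biprod.fst, smd_smd hW k κ hkκ, fun Y hY => ?_⟩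
  refine (hp Y hY).retract k κ biprod.inl biprod.fst hkκ biprod.inl_fst ?_ ?_
  · conv_lhs => rw [hpdec]
    rw [Preadditive.comp_add, ← Category.assoc k ρ, hkρ, zero_comp, add_zero]
    simp only [Category.assoc]
  · rw [← Category.assoc, ← hκ, Preadditive.sub_comp, Category.assoc, ← Category.assoc ζ, hζ,
      biprod.inr_fst, comp_zero, sub_zero, Category.id_comp]

end Aux

set_option linter.unusedSectionVars false
section Aux
variable {C}

/-! ### From approximability with respect to the generating sequence to approximability -/

lemma HZ.bigClosure {U : Set C} {T X : C} (hU : ∀ X ∈ U, HZ X T) (h : bigClosure C U X) :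
    HZ X T := by
  induction h with
  | of h => exact hU _ h
  | zero h => exact .of_isZero h
  | coprod f _ e ih => exact (HZ.coprod ih).iso_src e
  | ext f g h hT _ _ h1 h2 => exact .ext_src hT h1 h2
  | retract i r hir _ ih => exact ih.retract_src i r hir

lemma seq_hom_zero {G₀ : C} (hgen : IsCompactGenerator C G₀) {Y : C} (P : ℕ → C → Prop)
    (step : ∀ k D, P k D → ∀ f : D ⟶ Y, ∃ (D' : C) (g : D ⟶ D') (f' : D' ⟶ Y),
      P (k + 1) D' ∧ f = g ≫ f')
    (van : ∀ n : ℤ, ∃ N : ℕ, ∀ k, N ≤ k → ∀ D, P k D → HZ (G₀⟦n⟧) D)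
    (F : C) (hF : P 0 F) : HZ F Y := by
  intro f
  choose nD ng nf hP hfac using step
  let st : ∀ k, {D : Σ D : C, (D ⟶ Y) // P k D.1} := fun k =>
    Nat.rec (motive := fun k => {D : Σ D : C, (D ⟶ Y) // P k D.1}) ⟨⟨F, f⟩, hF⟩
      (fun k x => ⟨⟨nD k x.1.1 x.2 x.1.2, nf k x.1.1 x.2 x.1.2⟩, hP k x.1.1 x.2 x.1.2⟩) k
  let E : ℕ → C := fun k => (st k).1.1
  let θ : ∀ k, E k ⟶ Y := fun k => (st k).1.2
  let e : ∀ k, E k ⟶ E (k + 1) := fun k => ng k (st k).1.1 (st k).2 (st k).1.2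
  have hθ : ∀ k, θ k = e k ≫ θ (k + 1) := fun k => hfac k (st k).1.1 (st k).2 (st k).1.2
  have hE : ∀ k, P k (E k) := fun k => (st k).2
  obtain ⟨H, π, δ, hH⟩ := exists_hocolim E e
  have hz : IsZero H := hgen.2 H fun n φ => by
    obtain ⟨N, hN⟩ := van n
    exact hocolim_hom_zero hH (compact_shift hgen.1 n)
      (fun m x => evZero_of_eventually N (fun k hk x => hN k hk _ (hE k) x) m x) φ
  obtain ⟨ψ, hψ⟩ := ye2 hH (seqDesc E θ) (by
    refine seq_ext fun n => ?_
    rw [← Category.assoc, seqInj_oms, Preadditive.sub_comp, Category.assoc, seqInj_desc,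
      seqInj_desc, comp_zero, ← hθ, sub_self])
  have h0 : θ 0 = 0 := by
    rw [← seqInj_desc E θ 0, hψ, hz.eq_of_src ψ 0, comp_zero, comp_zero]
  exact h0

lemma R_sub {G₀ : C} (hgen : IsCompactGenerator C G₀) {Rm : ℤ → Set C} {A : ℤ}
    (h : IsWeakGApprox C (genSeqNeg C G₀) Rm A) {i : ℤ} {F Y : C} (hF : F ∈ Rm i)
    (hY : Y ∈ Sn G₀ (i - A)) : HZ F Y := by
  refine seq_hom_zero hgen (fun k D => D ∈ Rm (i + k)) ?_ ?_ F (by simpa using hF)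
  · intro k D hD f
    obtain ⟨E, D', a, b, c, hT, hE, hD'⟩ := h.approx _ D hD
    have hEY : HZ E Y := HZ.bigClosure (fun X hX => by
      obtain ⟨m, hm1, hm2, ⟨e⟩⟩ := mem_unionIcc.1 hX
      exact (hY (-m) (by omega)).iso_src e) hE
    obtain ⟨f', hf'⟩ := ye2 hT f (hEY _)
    refine ⟨D', b, f', ?_, hf'⟩
    have : i + ((k + 1 : ℕ) : ℤ) = i + k + 1 := by push_cast; ring
    rwa [this]
  · intro n
    refine ⟨(A + n - i).toNat, fun k hk D hD => ?_⟩
    refine h.hom_vanish (-n) (i + k) (by omega) _ ?_ _ hD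
    change _ ∈ singletonShift C G₀ (- -n)
    rw [neg_neg]
    exact mem_singletonShift G₀ n

lemma Sn_shift {G₀ : C} {a b n : ℤ} (h : a + n ≤ b) {Y : C} (hY : Y ∈ Sn G₀ a) :
    Y⟦n⟧ ∈ Sn G₀ b := fun m hm =>
  HZ.shift_left (n := -n) (by omega) ((hY (m - n) (by omega)).iso_src (shAdd G₀ (by omega)))

lemma Sn_iso {G₀ : C} {a : ℤ} ⦃X Y : C⦄ (e : X ≅ Y) (hX : X ∈ Sn G₀ a) : Y ∈ Sn G₀ a :=
  fun m hm => (hX m hm).iso_tgt e.symm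

/-- The coaisle. -/
def coaisle (G₀ : C) (a : ℤ) : Set C := {X | X⟦(-1 : ℤ)⟧ ∈ Sn G₀ a}

lemma coaisle_iso {G₀ : C} {a : ℤ} ⦃X Y : C⦄ (e : X ≅ Y) (hX : X ∈ coaisle G₀ a) :
    Y ∈ coaisle G₀ a := Sn_iso ((shiftFunctor C (-1 : ℤ)).mapIso e) hX

lemma mem_shift_coaisle {G₀ : C} {a : ℤ} {X : C} :
    X ∈ shiftSet C (-1) (coaisle G₀ a) ↔ X ∈ Sn G₀ a := by
  rw [mem_shiftSet coaisle_iso (by omega : (-1 : ℤ) + 1 = 0)]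
  have e : (X⟦(1 : ℤ)⟧)⟦(-1 : ℤ)⟧ ≅ X := (shAdd X (by omega : (1 : ℤ) + -1 = 0)).trans (shZero X rfl)
  exact ⟨fun h => Sn_iso e h, fun h => Sn_iso e.symm h⟩

lemma aisle_iso {S : Set C} ⦃X Y : C⦄ (e : X ≅ Y) (hX : X ∈ lOrth C S) : Y ∈ lOrth C S :=
  fun T hT => HZ.iso_src (hX T hT) e.symm

lemma tstr {G₀ : C} (hc : IsCompactObj C G₀) (a : ℤ) :
    IsTStructure C (lOrth C (Sn G₀ a)) (coaisle G₀ a) := by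
  refine ⟨aisle_iso, coaisle_iso, ?_, ?_, ?_, ?_⟩
  · rintro X ⟨b, hb, ⟨e⟩⟩
    refine aisle_iso e.symm fun Y hY => ?_
    exact HZ.shift_right (m := -1) (by omega) (hb _ (Sn_shift (by omega) hY))
  · intro X hX
    rw [mem_shiftSet coaisle_iso (by omega : (1 : ℤ) + -1 = 0)]
    exact Sn_shift (by omega) hX
  · intro X hX B hB
    exact hX B (mem_shift_coaisle.1 hB)
  · intro t
    obtain ⟨u, v, f, g, d, hT, h1, h2⟩ := exists_trunc (fun j : ℕ => G₀⟦a + (j : ℤ)⟧)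
      (fun j => compact_shift hc _) t
    refine ⟨u, v, f, g, d, hT, fun Y hY => h1 Y fun j => hY _ (by omega), ?_⟩
    refine mem_shift_coaisle.2 fun m hm => ?_
    obtain ⟨k, hk⟩ := Int.eq_ofNat_of_zero_le (by omega : 0 ≤ m - a)
    obtain rfl : m = a + (k : ℤ) := by omega
    exact h2 k

lemma aisle_sub {G₀ : C} {Rm : ℤ → Set C} {A : ℤ}
    (h : IsGPreApprox C (genSeqNeg C G₀) Rm A) : lOrth C (Sn G₀ A) ⊆ Rm 0 := by
  intro X hX
  rw [← h.orthMetric.orth]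
  intro B hB
  refine hX B fun m hm => hB _ ?_
  exact (h.cond1 0 (mem_MG (by omega))).1

lemma backward_aux {G₀ : C} (hc : IsCompactObj C G₀) {Rm : ℤ → Set C} {A A' : ℤ} (hA' : A ≤ A')
    (h : IsWeakGApprox C (genSeqNeg C G₀) Rm A) {T T' : Set C} (hTT : T ⊆ T')
    (H : ∀ F ∈ Rm 0, ∃ (W : C) (p : W ⟶ F), W ∈ T ∧ ∀ Y ∈ Sn G₀ (A + 1), Good p Y) :
    0 < A' ∧ IsTStructure C (lOrth C (Sn G₀ A)) (coaisle G₀ A) ∧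
    (shiftFunctor C A').obj G₀ ∈ lOrth C (Sn G₀ A) ∧
    (∀ i : ℤ, A' ≤ i → ∀ u ∈ lOrth C (Sn G₀ A),
      ∀ f : (shiftFunctor C (-i)).obj G₀ ⟶ u, f = 0) ∧
    ∀ F ∈ lOrth C (Sn G₀ A), approxTriangle C F T' (shiftSet C 1 (lOrth C (Sn G₀ A))) := by
  have hA := h.A_pos
  refine ⟨by omega, tstr hc A, fun Y hY => hY _ hA', fun i hi u hu => ?_, fun F hF => ?_⟩
  · exact h.hom_vanish i 0 (by omega) _ (mem_singletonShift G₀ _) _ (aisle_sub h.toIsGPreApprox hu)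
  · obtain ⟨W, p, hW, hp⟩ := H F (aisle_sub h.toIsGPreApprox hF)
    obtain ⟨D, b, c, hT⟩ := distinguished_cocone_triangle p
    refine ⟨W, D, p, b, c, hT, hTT hW, ?_⟩
    rw [mem_shiftSet aisle_iso (by omega : (1 : ℤ) + -1 = 0)]
    intro Y hY
    refine HZ.shift_right (m := 1) (by omega) ?_
    exact (hp _ (Sn_shift (by omega) hY)).cone hT

lemma weak_core {G₀ : C} (hgen : IsCompactGenerator C G₀) {Rm : ℤ → Set C} {A : ℤ}
    (h : IsWeakGApprox C (genSeqNeg C G₀) Rm A) (k : ℕ) : ∀ i : ℤ, 0 ≤ i → i + k = 2 * A + 1 →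
    ∀ F ∈ Rm i, ∃ (W : C) (p : W ⟶ F), W ∈ gBarInt C (genSeqNeg C G₀) (-(3 * A)) A ∧
      ∀ Y ∈ Sn G₀ (A + 1), Good p Y := by
  induction k with
  | zero =>
    intro i _ hi F hF
    refine ⟨_, 0, .zero (isZero_zero C), fun Y hY => good_of_zero (isZero_zero C) _ ?_⟩
    refine R_sub hgen h hF ?_
    have : i - A = A + 1 := by push_cast at hi; omega
    rwa [this]
  | succ k ih =>
    intro i hi0 hi F hF
    push_cast at hi
    obtain ⟨E, D, a, b, c, hT, hE, hD⟩ := h.approx i F hF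
    obtain ⟨W', w, hW', hw⟩ := ih (i + 1) (by omega) (by omega) D hD
    obtain ⟨W, j, q, p, hW, _, _, hg⟩ := good_ext hT w
    refine ⟨W, p, .ext _ _ _ hW (bigClosure_mono ?_ hE) hW', fun Y hY => hg Y (hw Y hY)⟩
    intro X hX
    obtain ⟨m, hm1, hm2, hm⟩ := mem_unionIcc.1 hX
    exact mem_unionIcc.2 ⟨m, by omega, by omega, hm⟩

lemma strong_core {G₀ : C} (hgen : IsCompactGenerator C G₀) {Rm : ℤ → Set C} {A : ℤ}
    (h : IsGApprox C (genSeqNeg C G₀) Rm A) (k : ℕ) : ∀ i : ℤ, 0 ≤ i → i + k = 2 * A + 1 →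
    ∀ F ∈ Rm i, App (unionIcc C (genSeqNeg C G₀) (-(3 * A)) A) (Sn G₀ (A + 1)) (k * A.toNat) F := by
  induction k with
  | zero =>
    intro i _ hi F hF
    refine ⟨_, 0, ⟨_, ?_, 𝟙 _, 𝟙 _, Category.comp_id _⟩,
      fun Y hY => good_of_zero (isZero_zero C) _ ?_⟩
    · rw [Nat.zero_mul]
      exact isZero_zero C
    · refine R_sub hgen h.toIsWeakGApprox hF ?_
      have : i - A = A + 1 := by push_cast at hi; omega
      rwa [this]
  | succ k ih =>
    intro i hi0 hi F hF
    push_cast at hi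
    obtain ⟨E, D, a, b, c, hT, hE, hD⟩ := h.approx' i F hF
    have : (k + 1) * A.toNat = A.toNat + k * A.toNat := by ring
    rw [this]
    refine app_smd (B := rOrth C (Rm (i + 1))) (fun D hD => ?_) a
      (smd_mono (coprodPowBig_mono ?_ _) hE) (fun Y hY => good_of_cone hT (hY D hD))
    · rw [h.orthMetric.orth] at hD
      exact ih (i + 1) (by omega) (by omega) D hD
    · intro X hX
      obtain ⟨m, hm1, hm2, hm⟩ := mem_unionIcc.1 hX
      exact mem_unionIcc.2 ⟨m, by omega, by omega, hm⟩

lemma unionIcc_neg_pos {G₀ : C} {A A' : ℤ} (hA : 0 < A) (h : 3 * A ≤ A') :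
    unionIcc C (genSeqNeg C G₀) (-(3 * A)) A ⊆ unionIcc C (genSeqPos C G₀) (-A') A' := by
  intro X hX
  obtain ⟨m, hm1, hm2, hm⟩ := mem_unionIcc.1 hX
  exact mem_unionIcc.2 ⟨-m, by omega, by omega, hm⟩

lemma weak_backward {G₀ : C} (hgen : IsCompactGenerator C G₀)
    (H : ∃ (Rm : ℤ → Set C) (A : ℤ), IsWeakGApprox C (genSeqNeg C G₀) Rm A) :
    WeaklyApproximable C G₀ := by
  obtain ⟨Rm, A, h⟩ := H
  have hA := h.A_pos
  exact ⟨3 * A, _, _, backward_aux hgen.1 (by omega) h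
    (fun X hX => bigClosure_mono (unionIcc_neg_pos hA le_rfl) hX)
    (weak_core hgen h (2 * A + 1).toNat 0 le_rfl (by omega))⟩

lemma strong_backward {G₀ : C} (hgen : IsCompactGenerator C G₀)
    (H : ∃ (Rm : ℤ → Set C) (A : ℤ), IsGApprox C (genSeqNeg C G₀) Rm A) :
    Approximable C G₀ := by
  obtain ⟨Rm, A, h⟩ := H
  have hA := h.A_pos
  have h3 : 3 * A ≤ (2 * A + 1) * A := by nlinarith
  have hn : ((2 * A + 1) * A).toNat = (2 * A + 1).toNat * A.toNat :=
    Int.toNat_mul (by omega) (by omega)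
  refine ⟨(2 * A + 1) * A, _, _, backward_aux hgen.1 (by omega) h.toIsWeakGApprox ?_
    (strong_core hgen h (2 * A + 1).toNat 0 le_rfl (by omega))⟩
  intro X hX
  change X ∈ smd C _
  rw [hn]
  exact smd_mono (coprodPowBig_mono (unionIcc_neg_pos hA h3) _) hX

end Aux

theorem statement_13 (G₀ : C)
    (hcg : CompactlyGenerated C) (hgen : IsCompactGenerator C G₀) :
    IsGenSeq C (genSeqNeg C G₀) ∧
    (WeaklyApproximable C G₀ ↔
      ∃ (Rm : ℤ → Set C) (A : ℤ), IsWeakGApprox C (genSeqNeg C G₀) Rm A) ∧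
    (Approximable C G₀ ↔
      ∃ (Rm : ℤ → Set C) (A : ℤ), IsGApprox C (genSeqNeg C G₀) Rm A) := by
  exact ⟨isGenSeq hgen, ⟨weak_forward hgen.1, weak_backward hgen⟩,
    ⟨strong_forward hgen.1, strong_backward hgen⟩⟩

end GApprox
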